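/- Fix y ∈ ℝ² and let F be the unique holomorphic function on D₂ = {(b,x) ∈ S_a × ℂ² : |Im(x₁−x₂)| < 2a − Re b} agreeing with J₂(b;x,y) for real x. Set a_s = min(a₊,a₋), a_l = max(a₊,a₋), s_δ(z) = sinh(πz/a_δ) and e_δ(z) = exp(πz/a_δ) for δ ∈ {+,−}, where a_+ = a₊ and a_− = a₋. Then for all (b,x) with Re b ∈ (0,a_s) and |Im(x₁−x₂)| < a_s − Re b, and for δ ∈ {+,−}: (i) if s_δ(x₁−x₂) ≠ 0 then (s_δ(x₁−x₂−ib)/s_δ(x₁−x₂))·F(b,(x₁−ia_{−δ},x₂)) + (s_δ(x₂−x₁−ib)/s_δ(x₂−x₁))·F(b,(x₁,x₂−ia_{−δ})) = (e_δ(2y₁)+e_δ(2y₂))·F(b,x); and (ii) F(b,(x₁−ia_{−δ},x₂−ia_{−δ})) = e_δ(2y₁+2y₂)·F(b,x). Here a_{−δ} denotes a₋ when δ = + and a₊ when δ = −. -/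

import Mathlib

open MeasureTheory Complex

/-- `α = 2π/(a₊a₋)`. -/
noncomputable def alphaPar (ap am : ℝ) : ℝ := 2 * Real.pi / (ap * am)

/-- The function `g(a₊,a₋;z)` from the integral representation of the hyperbolic gamma
function. -/
noncomputable def ghyp (ap am : ℝ) (z : ℂ) : ℂ :=
  ∫ y in Set.Ioi (0 : ℝ),
    (1 / (y : ℂ)) *
      (Complex.sin (2 * (y : ℂ) * z) /
          (2 * Complex.sinh ((ap : ℂ) * (y : ℂ)) * Complex.sinh ((am : ℂ) * (y : ℂ))) -
        z / ((ap : ℂ) * (am : ℂ) * (y : ℂ)))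

/-- The hyperbolic gamma function `G(a₊,a₋;z) = exp(i g(a₊,a₋;z))`. -/
noncomputable def Ghyp (ap am : ℝ) (z : ℂ) : ℂ := Complex.exp (Complex.I * ghyp ap am z)

/-- The two-particle joint eigenfunction `J₂(b;x,y)` for real `x, y`. -/
noncomputable def J2 (ap am : ℝ) (b : ℂ) (x y : Fin 2 → ℝ) : ℂ :=
  Complex.exp (Complex.I * (alphaPar ap am : ℂ) * (y 1 : ℂ) * ((x 0 : ℂ) + (x 1 : ℂ))) *
    ∫ z : ℝ, Complex.exp (Complex.I * (alphaPar ap am : ℂ) * (z : ℂ) * ((y 0 : ℂ) - (y 1 : ℂ))) *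
      ∏ j : Fin 2,
        Ghyp ap am ((x j : ℂ) - (z : ℂ) - Complex.I * b / 2) /
          Ghyp ap am ((x j : ℂ) - (z : ℂ) + Complex.I * b / 2)

/-- The domain `D₂ = {(b,x) ∈ S_a × ℂ² : |Im(x₁−x₂)| < 2a − Re b}`. -/
def D2 (ap am : ℝ) : Set (ℂ × (Fin 2 → ℂ)) :=
  {p | (0 < p.1.re ∧ p.1.re < ap + am) ∧ |(p.2 0 - p.2 1).im| < ap + am - p.1.re}


lemma ident_aux {U : Set ℂ} (hU : IsOpen U) (hc : Convex ℝ U) {f g : ℂ → ℂ}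
    (hf : DifferentiableOn ℂ f U) (hg : DifferentiableOn ℂ g U) (h0 : (0 : ℂ) ∈ U)
    (h : ∀ᶠ r : ℝ in nhds 0, f r = g r) : Set.EqOn f g U := by
  apply (hf.analyticOnNhd hU).eqOn_of_preconnected_of_frequently_eq (hg.analyticOnNhd hU)
    hc.isPreconnected h0
  have h1 : ∃ᶠ r : ℝ in nhdsWithin 0 {0}ᶜ, f r = g r :=
    (h.filter_mono nhdsWithin_le_nhds).frequently
  have h2 : Filter.Tendsto (fun r : ℝ => (r : ℂ)) (nhdsWithin 0 {0}ᶜ) (nhdsWithin 0 {0}ᶜ) := by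
    apply tendsto_nhdsWithin_of_tendsto_nhds_of_eventually_within
    · have := Complex.continuous_ofReal.tendsto 0
      simp only [Complex.ofReal_zero] at this
      exact this.mono_left nhdsWithin_le_nhds
    · filter_upwards [self_mem_nhdsWithin] with r hr
      simpa using hr
  exact h2.frequently h1

lemma holo_integral {α : Type*} [MeasurableSpace α] {μ : Measure α} {U : Set ℂ}
    {f : ℂ → α → ℂ}
    (hm : ∀ z ∈ U, AEStronglyMeasurable (f z) μ)
    (hd : ∀ᵐ a ∂μ, DifferentiableOn ℂ (fun z => f z a) U)
    (hb : ∀ z ∈ U, ∃ r > 0, Metric.ball z r ⊆ U ∧ ∃ B : α → ℝ, Integrable B μ ∧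
      ∀ᵐ a ∂μ, ∀ w ∈ Metric.ball z r, ‖f w a‖ ≤ B a) :
    DifferentiableOn ℂ (fun z => ∫ a, f z a ∂μ) U := by
  intro z hz
  obtain ⟨r, hr, hsub, B, hB, hfB⟩ := hb z hz
  have hder : ∀ᵐ a ∂μ, ∀ w ∈ Metric.ball z r, HasDerivAt (fun z => f z a) (deriv (fun z => f z a) w) w := by
    filter_upwards [hd] with a ha w hw
    exact ((ha.mono hsub).differentiableAt (Metric.isOpen_ball.mem_nhds hw)).hasDerivAt
  have hder2 : ∀ᵐ a ∂μ, ∀ w ∈ Metric.ball z (r/2), HasDerivAt (fun z => f z a) (deriv (fun z => f z a) w) w := by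
    filter_upwards [hder] with a ha w hw
    exact ha w (Metric.ball_subset_ball (by linarith) hw)
  have hnb : ∀ᵐ a ∂μ, ∀ w ∈ Metric.ball z (r/2), ‖deriv (fun z => f z a) w‖ ≤ B a / (r/4) := by
    filter_upwards [hder, hfB] with a ha hab w hw
    have hs : Metric.closedBall w (r/4) ⊆ Metric.ball z r := by
      intro v hv
      simp only [Metric.mem_ball, Metric.mem_closedBall] at *
      linarith [dist_triangle v w z]
    apply Complex.norm_deriv_le_of_forall_mem_sphere_norm_le (by positivity)
    · apply DifferentiableOn.diffContOnCl
      intro v hv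
      have := hs (Metric.closure_ball_subset_closedBall hv)
      exact (ha v this).differentiableAt.differentiableWithinAt
    · intro v hv
      exact hab v (hs (Metric.sphere_subset_closedBall hv))
  have hmeas : AEStronglyMeasurable (fun a => deriv (fun z => f z a) z) μ := by
    have hseq : ∀ n : ℕ, z + ((r / (2*(n + 1)) : ℝ) : ℂ) ∈ Metric.ball z r := by
      intro n
      simp only [Metric.mem_ball, dist_self_add_left, Complex.norm_real, Real.norm_eq_abs]
      rw [abs_of_pos (by positivity), div_lt_iff₀ (by positivity)]
      have : (0:ℝ) ≤ n := n.cast_nonneg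
      nlinarith
    have ht : Filter.Tendsto (fun n : ℕ => z + ((r / (2*(n + 1)) : ℝ) : ℂ)) Filter.atTop (nhdsWithin z {z}ᶜ) := by
      apply tendsto_nhdsWithin_of_tendsto_nhds_of_eventually_within
      · have h1 : Filter.Tendsto (fun n : ℕ => (r/2) * (1 / ((n:ℝ)+1))) Filter.atTop (nhds ((r/2)*0)) :=
          tendsto_one_div_add_atTop_nhds_zero_nat.const_mul _
        have h2 := (Complex.continuous_ofReal.tendsto _).comp h1
        have h3 := h2.const_add z
        simp only [mul_zero, Complex.ofReal_zero, add_zero] at h3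
        refine h3.congr fun n => ?_
        simp only [Function.comp]
        congr 2
        field_simp
      · refine Filter.Eventually.of_forall fun n => ?_
        have : (r / (2*((n:ℝ) + 1)) : ℝ) ≠ 0 := by positivity
        simp only [Set.mem_compl_iff, Set.mem_singleton_iff, add_eq_left, Complex.ofReal_eq_zero]
        exact this
    refine aestronglyMeasurable_of_tendsto_ae Filter.atTop
      (f := fun (n : ℕ) a => slope (fun z => f z a) z (z + ((r / (2*(n + 1)) : ℝ) : ℂ))) ?_ ?_
    · intro n
      simp only [slope_def_module]
      exact AEStronglyMeasurable.const_smul ((hm _ (hsub (hseq n))).sub (hm z hz)) (_ : ℂ)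
    · filter_upwards [hder] with a ha
      have := hasDerivAt_iff_tendsto_slope.1 (ha z (Metric.mem_ball_self hr))
      exact this.comp ht
  have hint : Integrable (f z) μ := by
    refine hB.mono' (hm z hz) ?_
    filter_upwards [hfB] with a ha
    exact ha z (Metric.mem_ball_self hr)
  have := (hasDerivAt_integral_of_dominated_loc_of_deriv_le (Metric.ball_mem_nhds z (half_pos hr))
    (F := f) (by
      filter_upwards [Metric.ball_mem_nhds z hr] with w hw
      exact hm w (hsub hw)) hint hmeas hnb (hB.div_const _) hder2).2
  exact this.differentiableAt.differentiableWithinAt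

lemma norm_exp_I_le (w : ℂ) : ‖exp (w * I)‖ ≤ Real.exp |w.im| := by
  rw [Complex.norm_exp]
  apply Real.exp_le_exp.2
  simp
  exact neg_le_abs _

lemma norm_cos_le' (w : ℂ) : ‖cos w‖ ≤ Real.exp |w.im| := by
  rw [Complex.cos, norm_div]
  have h1 := norm_exp_I_le w
  have h2 := norm_exp_I_le (-w)
  simp only [Complex.neg_im, abs_neg] at h2
  have := norm_add_le (exp (w*I)) (exp (-w*I))
  rw [Complex.norm_ofNat]
  linarith

lemma norm_sin_le' (w : ℂ) : ‖sin w‖ ≤ Real.exp |w.im| := by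
  rw [Complex.sin, norm_div, norm_mul]
  have h1 := norm_exp_I_le w
  have h2 := norm_exp_I_le (-w)
  simp only [Complex.neg_im, abs_neg] at h2
  have := norm_sub_le (exp (-w*I)) (exp (w*I))
  rw [Complex.norm_ofNat, Complex.norm_I]
  linarith

lemma norm_sin_le (w : ℂ) : ‖sin w‖ ≤ ‖w‖ * Real.exp |w.im| := by
  have hconv : Convex ℝ {v : ℂ | |v.im| ≤ |w.im|} := by
    have : {v : ℂ | |v.im| ≤ |w.im|} = Complex.imLm ⁻¹' (Set.Icc (-|w.im|) |w.im|) := by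
      ext v; simp [abs_le]
    rw [this]
    exact (convex_Icc _ _).linear_preimage _
  have := hconv.norm_image_sub_le_of_norm_hasDerivWithin_le (f := sin) (f' := cos) (x := 0) (y := w)
    (C := Real.exp |w.im|)
    (fun x hx => (Complex.hasDerivAt_sin x).hasDerivWithinAt)
    (fun x hx => (norm_cos_le' x).trans (Real.exp_le_exp.2 hx))
    (show |(0:ℂ).im| ≤ |w.im| by simp) (show |w.im| ≤ |w.im| from le_rfl)
  simpa [mul_comm] using this

lemma div_sinh_le {M y : ℝ} (hM : 0 < M) (hy : 0 < y) :
    y / Real.sinh (M * y) ≤ (1 / M + 2 * y) * Real.exp (-(M * y)) := by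
  have hx : 0 < M * y := by positivity
  have hs : 0 < Real.sinh (M*y) := Real.sinh_pos_iff.2 hx
  rw [div_le_iff₀ hs, Real.sinh_eq]
  have h1 : Real.exp (-(M*y)) * Real.exp (M*y) = 1 := by rw [← Real.exp_add]; simp
  have h2 : 2*(M*y) + 1 ≤ Real.exp (M*y) * Real.exp (M*y) := by
    rw [← Real.exp_add]
    have := Real.add_one_le_exp (M*y+M*y)
    linarith
  have h3 : (Real.exp (-(M*y)))*(Real.exp (-(M*y))) * (2*(M*y) + 1) ≤ 1 := by
    calc _ ≤ (Real.exp (-(M*y)))*(Real.exp (-(M*y))) * (Real.exp (M*y) * Real.exp (M*y)) := by gcongr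
      _ = (Real.exp (-(M*y)) * Real.exp (M*y))^2 := by ring
      _ = 1 := by rw [h1]; norm_num
  have h4 : (1 / M + 2 * y) = (1 + 2*(M*y))/M := by field_simp
  rw [h4]
  set e := Real.exp (-(M*y))
  set E := Real.exp (M*y)
  have : (1 + 2 * (M * y)) / M * e * ((E - e) / 2) = (1 + 2 * (M * y)) / M * (e * E) / 2 - (e * e * (2*(M*y)+1)) / M / 2 := by ring
  rw [this, h1]
  have : (1 + 2 * (M * y)) / M * 1 / 2 - 1 / M / 2 = y := by field_simp; ring
  have h5 : (e * e * (2*(M*y)+1)) / M / 2 ≤ 1 / M / 2 := by gcongr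
  linarith

lemma even_quad {f : ℂ → ℂ} (hf : AnalyticAt ℂ f 0) (he : ∀ w, f (-w) = f w) (h0 : f 0 = 0) :
    ∃ C δ : ℝ, 0 < C ∧ 0 < δ ∧ ∀ y : ℝ, 0 < y → y < δ → ‖f y‖ ≤ C * y ^ 2 := by
  obtain ⟨p, hp⟩ := hf
  have h1 := hp.isBigO_sub_partialSum_pow 2
  have hps : ∀ y, p.partialSum 2 y = y * p.coeff 1 := by
    intro y
    rw [FormalMultilinearSeries.partialSum]
    simp [Finset.sum_range_succ, FormalMultilinearSeries.apply_eq_pow_smul_coeff]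
    have := hp.coeff_zero (fun _ => (1:ℂ))
    rw [h0] at this
    exact this
  have hder : p.coeff 1 = 0 := by
    have hd := hp.hasDerivAt
    have hd' : HasDerivAt f (p 1 fun _ => 1) (-0) := by simpa using hd
    have hd2 := HasDerivAt.scomp (0:ℂ) hd' (hasDerivAt_neg (0:ℂ))
    have hfe : (f ∘ fun x => -x) = f := funext he
    change HasDerivAt (f ∘ fun x => -x) _ _ at hd2
    rw [hfe] at hd2
    simp only [smul_eq_mul] at hd2
    have := hd.unique hd2
    have h3 : (p 1 fun _ => 1) = 0 := by
      have h := this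
      linear_combination h/2
    rw [FormalMultilinearSeries.coeff]
    exact h3
  simp only [hps, hder, mul_zero, sub_zero, zero_add] at h1
  obtain ⟨C, hC, hb⟩ := h1.exists_pos
  rw [Asymptotics.IsBigOWith] at hb
  obtain ⟨δ, hδ, hball⟩ := Metric.eventually_nhds_iff.1 hb
  refine ⟨C, δ, hC, hδ, fun y hy hyd => ?_⟩
  have := hball (y := (y:ℂ)) (by simpa [abs_of_pos hy] using hyd)
  simpa [abs_of_pos hy] using this

lemma integrableOn_Ioi_of_bdd {h : ℝ → ℂ} {C δ : ℝ} (hδ : 0 < δ) (hc : ContinuousOn h (Set.Ioi 0))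
    (hb : ∀ y : ℝ, 0 < y → y < δ → ‖h y‖ ≤ C) (hi : IntegrableOn h (Set.Ioi (δ/2))) :
    IntegrableOn h (Set.Ioi 0) := by
  have : Set.Ioi (0:ℝ) = Set.Ioc 0 (δ/2) ∪ Set.Ioi (δ/2) := by
    rw [Set.Ioc_union_Ioi_eq_Ioi]; positivity
  rw [this]
  refine IntegrableOn.union ?_ hi
  refine IntegrableOn.of_bound (C := C) (by simp) ?_ ?_
  · exact (hc.mono (fun y hy => hy.1)).aestronglyMeasurable measurableSet_Ioc
  · filter_upwards [ae_restrict_mem measurableSet_Ioc] with y hy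
    exact hb y hy.1 (by linarith [hy.2])

lemma integrable_lin_exp {A B k : ℝ} (hk : 0 < k) :
    IntegrableOn (fun y : ℝ => (A + B * y) * Real.exp (-k * y)) (Set.Ioi 0) := by
  apply integrable_of_isBigO_exp_neg (b := k/2) (by positivity) (by fun_prop)
  have h1 : (fun y : ℝ => A + B * y) =O[Filter.atTop] fun y => Real.exp ((k/2)*y) := by
    apply Asymptotics.IsBigO.add
    · apply Asymptotics.IsBigO.of_bound |A|
      filter_upwards [Filter.eventually_ge_atTop 0] with y hy
      have : 1 ≤ Real.exp (k/2*y) := Real.one_le_exp (by positivity)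
      simp only [Real.norm_eq_abs, Real.abs_exp]
      nlinarith [abs_nonneg A]
    · apply Asymptotics.IsBigO.const_mul_left
      apply Asymptotics.IsBigO.of_bound (2/k)
      filter_upwards [Filter.eventually_ge_atTop 0] with y hy
      have : k/2*y + 1 ≤ Real.exp (k/2*y) := Real.add_one_le_exp _
      simp only [Real.norm_eq_abs, Real.abs_exp, abs_of_nonneg hy]
      calc y = 2/k * (k/2*y) := by field_simp
        _ ≤ _ := by gcongr; linarith
  have h2 := h1.mul (Asymptotics.isBigO_refl (fun y : ℝ => Real.exp (-k*y)) Filter.atTop)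
  refine h2.congr_right fun y => ?_
  rw [← Real.exp_add]; congr 1; ring


lemma div_sinh_le' {M M' : ℝ} (hM : 0 < M) (hM' : M' < M) :
    ∃ C > 0, ∀ y : ℝ, 0 < y → y / Real.sinh (M * y) ≤ C * Real.exp (-(M' * y)) := by
  refine ⟨1/M + 2/(M-M'), by have : 0 < M - M' := by linarith
                             positivity, fun y hy => ?_⟩
  have hk : 0 < M - M' := by linarith
  refine (div_sinh_le hM hy).trans ?_
  have h1 : Real.exp (-(M*y)) = Real.exp (-((M-M')*y)) * Real.exp (-(M'*y)) := by
    rw [← Real.exp_add]; congr 1; ring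
  rw [h1, ← mul_assoc]
  gcongr
  have h2 : Real.exp (-((M-M')*y)) ≤ 1 := Real.exp_le_one_iff.2 (by have := mul_pos hk hy; linarith)
  have h3 : (M-M')*y * Real.exp (-((M-M')*y)) ≤ 1 := by
    have := Real.add_one_le_exp ((M-M')*y)
    rw [Real.exp_neg, ← div_eq_mul_inv, div_le_one (Real.exp_pos _)]
    linarith
  have h4 : (1/M + 2*y) * Real.exp (-((M-M')*y)) = 1/M * Real.exp (-((M-M')*y)) + 2/(M-M') * ((M-M')*y * Real.exp (-((M-M')*y))) := by
    field_simp
  rw [h4]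
  have h5 : 1/M * Real.exp (-((M-M')*y)) ≤ 1/M * 1 := by gcongr
  have h6 : 2/(M-M') * ((M-M')*y * Real.exp (-((M-M')*y))) ≤ 2/(M-M') * 1 := by gcongr
  linarith

/-- sinh(Mw)/w, extended. -/
noncomputable def Sf (M : ℂ) : ℂ → ℂ := dslope (fun w : ℂ => sinh (M * w)) 0

lemma Sf_ne (M : ℂ) {w : ℂ} (hw : w ≠ 0) : Sf M w = sinh (M * w) / w := by
  rw [Sf, dslope_of_ne _ hw, slope_def_field]; simp

lemma Sf_zero (M : ℂ) : Sf M 0 = M := by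
  rw [Sf, dslope_same]
  have : HasDerivAt (fun w : ℂ => sinh (M * w)) (cosh (M * 0) * (M * 1)) 0 :=
    (((hasDerivAt_id (0:ℂ)).const_mul M)).csinh
  rw [this.deriv]; simp

lemma Sf_even (M : ℂ) (w : ℂ) : Sf M (-w) = Sf M w := by
  by_cases hw : w = 0
  · simp [hw]
  · rw [Sf_ne M hw, Sf_ne M (neg_ne_zero.2 hw)]
    simp [sinh_neg]

lemma Sf_analytic (M : ℂ) : AnalyticAt ℂ (Sf M) 0 := by
  have : Differentiable ℂ (Sf M) := by
    rw [← differentiableOn_univ, Sf, Complex.differentiableOn_dslope Filter.univ_mem]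
    fun_prop
  exact this.analyticAt 0

lemma csinh_ofReal_ne {M y : ℝ} (hM : 0 < M) (hy : 0 < y) : sinh ((M:ℂ) * y) ≠ 0 := by
  have : Real.sinh (M*y) ≠ 0 := (Real.sinh_pos_iff.2 (by positivity)).ne'
  rw [← ofReal_mul, ← ofReal_sinh]
  exact_mod_cast this

lemma norm_csinh {M y : ℝ} (hM : 0 < M) (hy : 0 < y) : ‖sinh ((M:ℂ) * y)‖ = Real.sinh (M*y) := by
  rw [← ofReal_mul, ← ofReal_sinh, Complex.norm_real, Real.norm_eq_abs,
    abs_of_pos (Real.sinh_pos_iff.2 (by positivity))]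

lemma int_gen {A : ℝ → ℂ} {κ : ℂ} {f : ℂ → ℂ} {C k : ℝ} (hA : ContinuousOn A (Set.Ioi 0))
    (hf : AnalyticAt ℂ f 0) (he : ∀ w, f (-w) = f w) (h0 : f 0 = 0)
    (hfA : ∀ y : ℝ, 0 < y → f y = y * A y - κ) (hk : 0 < k)
    (hb : ∀ y : ℝ, 0 < y → y ^ 2 * ‖A y‖ ≤ C * (1 + y) * Real.exp (-k * y)) :
    IntegrableOn (fun y : ℝ => (1 / (y:ℂ)) * (A y - κ / y)) (Set.Ioi 0) := by
  obtain ⟨D, δ, hD, hδ, hq⟩ := even_quad hf he h0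
  have hcA : ContinuousOn (fun y : ℝ => (1 / (y:ℂ)) * A y) (Set.Ioi 0) := by
    apply ContinuousOn.mul _ hA
    apply ContinuousOn.div continuousOn_const (by fun_prop)
    intro y hy; exact_mod_cast (ne_of_gt hy)
  have hcB : ContinuousOn (fun y : ℝ => (1 / (y:ℂ)) * (κ / y)) (Set.Ioi 0) := by
    apply ContinuousOn.mul
    all_goals
      apply ContinuousOn.div continuousOn_const (by fun_prop)
      intro y hy; exact_mod_cast (ne_of_gt hy)
  apply integrableOn_Ioi_of_bdd (C := D) hδ
  · refine (hcA.sub hcB).congr fun y hy => ?_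
    simp only [mul_sub, Pi.sub_apply]
  · intro y hy hyd
    have h1 := hq y hy hyd
    rw [hfA y hy] at h1
    have hy' : (y:ℂ) ≠ 0 := by exact_mod_cast hy.ne'
    have : (1 / (y:ℂ)) * (A y - κ / y) = (y * A y - κ) / (y:ℂ)^2 := by field_simp
    rw [this, norm_div, norm_pow, Complex.norm_real, Real.norm_eq_abs, abs_of_pos hy, div_le_iff₀ (by positivity)]
    exact h1
  · simp only [mul_sub]
    have hsub : Set.Ioi (δ/2) ⊆ Set.Ioi 0 := Set.Ioi_subset_Ioi (by positivity)
    apply Integrable.sub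
    · have hi : IntegrableOn (fun y : ℝ => (8 * C / δ^3 + 8 * C / δ^3 * y) * Real.exp (-k*y)) (Set.Ioi (δ/2)) :=
        (integrable_lin_exp hk).mono_set hsub
      refine Integrable.mono' hi ((hcA.mono hsub).aestronglyMeasurable measurableSet_Ioi) ?_
      filter_upwards [ae_restrict_mem measurableSet_Ioi] with y hy
      have hy1 : δ/2 < y := hy
      have hy0 : 0 < y := by linarith [half_pos hδ]
      have h1 := hb y hy0
      rw [norm_mul, norm_div, norm_one, Complex.norm_real, Real.norm_eq_abs, abs_of_pos hy0]
      have h2 : (δ/2)^3 ≤ y^3 := by gcongr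
      have h3 : 1 / y * ‖A y‖ = (y^2 * ‖A y‖) / y^3 := by field_simp
      rw [h3]
      have h4 : 0 ≤ y^2 * ‖A y‖ := by positivity
      calc (y^2 * ‖A y‖) / y^3 ≤ (y^2 * ‖A y‖) / (δ/2)^3 := by gcongr
        _ ≤ (C * (1 + y) * Real.exp (-k * y)) / (δ/2)^3 := by gcongr
        _ = _ := by field_simp; ring
    · have hi : IntegrableOn (fun y : ℝ => ‖κ‖ * y ^ (-2:ℝ)) (Set.Ioi (δ/2)) :=
        (integrableOn_Ioi_rpow_of_lt (by norm_num) (by positivity)).const_mul _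
      refine Integrable.mono' hi ((hcB.mono hsub).aestronglyMeasurable measurableSet_Ioi) ?_
      filter_upwards [ae_restrict_mem measurableSet_Ioi] with y hy
      have hy1 : δ/2 < y := hy
      have hy0 : 0 < y := by linarith [half_pos hδ]
      simp only [norm_mul, norm_div, norm_one, Complex.norm_real, Real.norm_eq_abs, abs_of_pos hy0]
      rw [Real.rpow_neg hy0.le]
      norm_cast
      apply le_of_eq
      field_simp

noncomputable def Lint (M : ℝ) (z : ℂ) (y : ℝ) : ℂ :=
  (1 / (y:ℂ)) * (cos (2 * y * z) / sinh (M * y) - (1 / (M:ℂ)) / y)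

noncomputable def LM (M : ℝ) (z : ℂ) : ℂ := ∫ y in Set.Ioi (0:ℝ), Lint M z y

lemma im_two_mul (y : ℝ) (z : ℂ) : (2 * (y:ℂ) * z).im = 2 * y * z.im := by
  simp

lemma abs_im_two_mul {y : ℝ} (hy : 0 < y) (z : ℂ) : |(2 * (y:ℂ) * z).im| = 2 * y * |z.im| := by
  rw [im_two_mul, abs_mul, abs_of_pos (by positivity)]

lemma contOn_div_sinh {M : ℝ} (hM : 0 < M) {g : ℝ → ℂ} (hg : Continuous g) :
    ContinuousOn (fun y : ℝ => g y / sinh ((M:ℂ) * y)) (Set.Ioi 0) :=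
  hg.continuousOn.div (by fun_prop) fun y hy => csinh_ofReal_ne hM hy

lemma Lint_integrable {M : ℝ} (hM : 0 < M) {z : ℂ} (hz : |z.im| < M / 2) :
    IntegrableOn (Lint M z) (Set.Ioi 0) := by
  obtain ⟨C, hC, hb⟩ := div_sinh_le' (M := M) (M' := M/2 + |z.im|) hM (by linarith)
  apply int_gen (A := fun y => cos (2 * y * z) / sinh (M * y)) (κ := 1 / (M:ℂ))
    (f := fun w => cos (2 * w * z) / Sf M w - 1 / M) (C := C) (k := M/2 - |z.im|)
  · exact contOn_div_sinh hM (by fun_prop)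
  · have h1 : AnalyticAt ℂ (fun w : ℂ => cos (2 * w * z)) 0 :=
      (by fun_prop : Differentiable ℂ (fun w : ℂ => cos (2 * w * z))).analyticAt 0
    exact (h1.div (Sf_analytic M) (by rw [Sf_zero]; exact_mod_cast hM.ne')).sub analyticAt_const
  · intro w; rw [Sf_even]; simp
  · simp [Sf_zero]
  · intro y hy
    have hy' : (y:ℂ) ≠ 0 := by exact_mod_cast hy.ne'
    rw [Sf_ne M hy']
    field_simp
  · linarith
  · intro y hy
    have hs : 0 < Real.sinh (M*y) := Real.sinh_pos_iff.2 (by positivity)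
    rw [norm_div, norm_csinh hM hy]
    have h1 := norm_cos_le' (2*y*z)
    rw [abs_im_two_mul hy] at h1
    calc y^2 * (‖cos (2*y*z)‖ / Real.sinh (M*y)) = y * ‖cos (2*y*z)‖ * (y / Real.sinh (M*y)) := by ring
      _ ≤ y * Real.exp (2*y*|z.im|) * (C * Real.exp (-((M/2+|z.im|)*y))) := by
        gcongr
        exact hb y hy
      _ = C * y * (Real.exp (2*y*|z.im|) * Real.exp (-((M/2+|z.im|)*y))) := by ring
      _ = C * y * Real.exp (-(M/2 - |z.im|) * y) := by rw [← Real.exp_add]; congr 2; ring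
      _ ≤ _ := by gcongr; linarith

lemma isOpen_strip (η : ℝ) : IsOpen {z : ℂ | |z.im| < η} :=
  isOpen_lt (by fun_prop) continuous_const

lemma convex_strip (η : ℝ) : Convex ℝ {z : ℂ | |z.im| < η} := by
  have : {v : ℂ | |v.im| < η} = Complex.imLm ⁻¹' (Set.Ioo (-η) η) := by
    ext v; simp [abs_lt]
  rw [this]
  exact (convex_Ioo _ _).linear_preimage _

lemma LM_hasDerivAt {M : ℝ} (hM : 0 < M) {z : ℂ} (hz : |z.im| < M / 2) :
    HasDerivAt (LM M) (∫ y in Set.Ioi (0:ℝ), -2 * (sin (2 * y * z) / sinh (M * y))) z := by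
  set η := (|z.im| + M/2)/2 with hη
  have hη1 : |z.im| < η := by rw [hη]; linarith
  have hη2 : η < M/2 := by rw [hη]; linarith
  obtain ⟨C, hC, hb⟩ := div_sinh_le' (M := M) (M' := M/2 + η) hM (by linarith)
  have hs : {w : ℂ | |w.im| < η} ∩ Metric.ball z 1 ∈ nhds z :=
    Filter.inter_mem ((isOpen_strip η).mem_nhds hη1) (Metric.ball_mem_nhds z one_pos)
  have hmeas : ∀ w : ℂ, AEStronglyMeasurable (Lint M w) (volume.restrict (Set.Ioi 0)) := by
    intro w
    apply ContinuousOn.aestronglyMeasurable _ measurableSet_Ioi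
    unfold Lint
    apply ContinuousOn.mul
    · apply ContinuousOn.div continuousOn_const (by fun_prop)
      intro y hy; exact_mod_cast (ne_of_gt hy)
    · apply (contOn_div_sinh hM (by fun_prop)).sub
      apply ContinuousOn.div continuousOn_const (by fun_prop)
      intro y hy; exact_mod_cast (ne_of_gt hy)
  refine (hasDerivAt_integral_of_dominated_loc_of_deriv_le
    (bound := fun y => (4 * (‖z‖+1) * C + 0 * y) * Real.exp (-(M/2-η) * y)) hs
    (F := Lint M) (F' := fun w (y:ℝ) => -2 * (sin (2 * y * w) / sinh (M * y)))
    (Filter.Eventually.of_forall hmeas) (Lint_integrable hM hz) ?_ ?_ (integrable_lin_exp (by linarith)) ?_).2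
  · apply ContinuousOn.aestronglyMeasurable _ measurableSet_Ioi
    exact continuousOn_const.mul (contOn_div_sinh hM (by fun_prop))
  · filter_upwards [ae_restrict_mem measurableSet_Ioi] with y hy w hw
    have hy0 : 0 < y := hy
    have hsp : 0 < Real.sinh (M*y) := Real.sinh_pos_iff.2 (by positivity)
    rw [norm_mul, norm_div, norm_csinh hM hy, norm_neg, Complex.norm_ofNat]
    have h1 := norm_sin_le (2*y*w)
    rw [abs_im_two_mul hy0, norm_mul, norm_mul, Complex.norm_ofNat, Complex.norm_real, Real.norm_eq_abs, abs_of_pos hy0] at h1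
    have hw1 : |w.im| ≤ η := hw.1.le
    have hw2 : ‖w‖ ≤ ‖z‖+1 := by
      have h := hw.2
      rw [Metric.mem_ball, dist_eq_norm] at h
      have := norm_add_le z (w-z)
      rw [add_sub_cancel] at this; linarith
    have hbb := hb y hy
    calc 2 * (‖sin (2*y*w)‖ / Real.sinh (M*y)) ≤ 2 * ((2*y*(‖z‖+1) * Real.exp (2*y*η)) / Real.sinh (M*y)) := by
          gcongr
          refine h1.trans ?_
          gcongr
      _ = 4 * (‖z‖+1) * Real.exp (2*y*η) * (y / Real.sinh (M*y)) := by ring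
      _ ≤ 4 * (‖z‖+1) * Real.exp (2*y*η) * (C * Real.exp (-((M/2+η)*y))) := by gcongr
      _ = 4 * (‖z‖+1) * C * (Real.exp (2*y*η) * Real.exp (-((M/2+η)*y))) := by ring
      _ = _ := by rw [← Real.exp_add, zero_mul, add_zero]; congr 2; ring
  · filter_upwards [ae_restrict_mem measurableSet_Ioi] with y hy w hw
    have hy' : (y:ℂ) ≠ 0 := by exact_mod_cast (ne_of_gt hy)
    have h1 : HasDerivAt (fun w : ℂ => cos (2*y*w)) (-sin (2*y*w) * (2*y*1)) w :=
      ((hasDerivAt_id w).const_mul (2*(y:ℂ))).ccos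
    have h2 := ((h1.div_const (sinh (M*y))).sub_const ((1/(M:ℂ))/y)).const_mul (1/(y:ℂ))
    refine h2.congr_deriv ?_
    field_simp

lemma cot_term_id {z : ℂ} {M : ℝ} (hM : 0 < M) {n : ℂ} (h : 4 * z^2 + n^2 * M^2 ≠ 0) :
    4 * z / (4 * z^2 + n^2 * M^2) =
      (I / M) * (1 / (2 * I * z / M - n) + 1 / (2 * I * z / M + n)) := by
  have hM' : (M:ℂ) ≠ 0 := by exact_mod_cast hM.ne'
  have e : (2*I*z - n*M) * (2*I*z + n*M) = -(4 * z^2 + n^2 * M^2) := by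
    ring_nf; rw [I_sq]; ring
  have h1 : (2*I*z - n*M) ≠ 0 := fun h' => h (by rw [h', zero_mul] at e; rw [← neg_eq_zero, ← e])
  have h2 : (2*I*z + n*M) ≠ 0 := fun h' => h (by rw [h', mul_zero] at e; rw [← neg_eq_zero, ← e])
  have e1 : 2 * I * z / M - n = (2*I*z - n*M)/M := by field_simp
  have e2 : 2 * I * z / M + n = (2*I*z + n*M)/M := by field_simp
  rw [e1, e2]
  have h3 : (4 * z^2 + n^2 * M^2) = -((2*I*z - n*M) * (2*I*z + n*M)) := by rw [e]; ring
  have h4 : (2*I*z - n*M) + (2*I*z + n*M) = 4*I*z := by ring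
  rw [h3]
  generalize 2*I*z - n*M = a at *
  generalize 2*I*z + n*M = b at *
  have h5 : (I / M) * (1 / (a / M) + 1 / (b / M)) = I * (a + b) / (a * b) := by
    field_simp; ring
  rw [h5, h4, div_neg, ← neg_div]
  congr 1
  linear_combination (-4*z) * I_sq

lemma den_ne {M : ℝ} (hM : 0 < M) {z : ℂ} (hz : |z.im| < M / 2) {n : ℝ} (hn : 1 ≤ n) :
    4 * z^2 + (n:ℂ)^2 * M^2 ≠ 0 := by
  have e : (2*I*z - n*M) * (2*I*z + n*M) = -(4 * z^2 + (n:ℂ)^2 * M^2) := by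
    ring_nf; rw [I_sq]; ring
  rw [abs_lt] at hz
  have hnM : M ≤ n * M := by nlinarith
  intro h
  rw [h, neg_zero, mul_eq_zero] at e
  rcases e with e | e <;>
  · have := congrArg Complex.re e
    simp at this
    linarith

lemma cot_id {v : ℂ} (h : sin (2 * v) ≠ 0) : (2 * cot (2 * v) - cot v) * cos v = - sin v := by
  rw [sin_two_mul] at h
  have h1 : sin v ≠ 0 := fun h' => h (by rw [h']; ring)
  have h2 : cos v ≠ 0 := fun h' => h (by rw [h']; ring)
  rw [cot, cot, sin_two_mul, cos_two_mul']
  field_simp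
  ring

lemma mem_compl {M : ℝ} (hM : 0 < M) {z : ℂ} (hz : |z.im| < M / 2) (hz0 : z ≠ 0) :
    2 * I * z / M ∈ Complex.integerComplement := by
  rintro ⟨n, hn⟩
  have hM' : (M:ℂ) ≠ 0 := by exact_mod_cast hM.ne'
  rw [eq_div_iff hM'] at hn
  have hre := congrArg Complex.re hn
  simp at hre
  rw [abs_lt] at hz
  have hn0 : n = 0 := by
    by_contra h
    rcases lt_or_gt_of_ne h with h | h
    · have : (n:ℝ) ≤ -1 := by exact_mod_cast Int.le_sub_one_of_lt h
      nlinarith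
    · have : (1:ℝ) ≤ n := by exact_mod_cast h
      nlinarith
  rw [hn0] at hn
  simp at hn
  exact hz0 hn

lemma mem_compl' {M : ℝ} (hM : 0 < M) {z : ℂ} (hz : |z.im| < M / 2) (hz0 : z ≠ 0) :
    I * z / M ∈ Complex.integerComplement := by
  rintro ⟨n, hn⟩
  refine mem_compl hM hz hz0 ⟨2*n, ?_⟩
  push_cast
  rw [hn]; ring

lemma summable_odd_cot {M : ℝ} (hM : 0 < M) {z : ℂ} (hz : |z.im| < M / 2) (hz0 : z ≠ 0) :
    (∑' n : ℕ, 4 * z / (4 * z^2 + (2 * (n:ℂ) + 1)^2 * M^2)) * cosh (Real.pi * z / M) =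
      Real.pi / (2 * M) * sinh (Real.pi * z / M) := by
  have hM' : (M:ℂ) ≠ 0 := by exact_mod_cast hM.ne'
  set t : ℕ → ℂ := fun n => 4 * z / (4 * z^2 + ((n:ℂ) + 1)^2 * M^2) with ht
  have hX := mem_compl hM hz hz0
  have hx := mem_compl' hM hz hz0
  have hne : ∀ n : ℕ, 4 * z^2 + ((n:ℂ) + 1)^2 * M^2 ≠ 0 := by
    intro n
    have := den_ne hM hz (n := (n:ℝ)+1) (by linarith [n.cast_nonneg (α := ℝ)])
    exact_mod_cast this
  have ht1 : ∀ n, t n = (I / M) * cotTerm (2 * I * z / M) n := by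
    intro n
    rw [ht, cotTerm]
    exact cot_term_id hM (hne n)
  have ht2 : ∀ n, t (2*n+1) = (I / (2*M)) * cotTerm (I * z / M) n := by
    intro n
    have h1 := hne (2*n+1)
    have h2 : 4 * z^2 + (((2*n+1 : ℕ):ℂ)+1)^2 * M^2 = 4 * (z^2 + ((n:ℂ)+1)^2*M^2) := by push_cast; ring
    have h3 := cot_term_id (z := z/2) hM (n := (n:ℂ)+1) (by
      intro h; apply h1; rw [h2]; linear_combination 4*h)
    rw [ht, cotTerm]
    simp only
    rw [h2]
    have e1 : 2 * I * (z/2) / M = I * z / M := by ring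
    rw [e1] at h3
    have e3 : 4 * z / (4 * (z^2 + ((n:ℂ)+1)^2*M^2)) = (1/2) * (4 * (z/2) / (4 * (z/2)^2 + ((n:ℂ)+1)^2*M^2)) := by
      have : 4 * (z/2)^2 + ((n:ℂ)+1)^2*M^2 = z^2 + ((n:ℂ)+1)^2*M^2 := by ring
      rw [this]
      have h5 : z^2 + ((n:ℂ)+1)^2*M^2 ≠ 0 := fun h => h1 (by rw [h2, h]; ring)
      field_simp
      ring
    rw [e3, h3]
    field_simp
  have hsum : Summable t := by
    simp_rw [funext ht1]
    exact (summable_cotTerm hX).mul_left _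
  have hev := tsum_even_add_odd (f := t) (hsum.comp_injective (fun a b h => by simpa using h))
    (hsum.comp_injective (fun a b h => by simpa using h))
  have c1 := cot_series_rep' hX
  have c2 := cot_series_rep' hx
  have s1 : ∑' n, t n = (I/M) * (Real.pi * cot (Real.pi * (2 * I * z / M)) - 1 / (2 * I * z / M)) := by
    rw [c1, ← tsum_mul_left]
    exact tsum_congr ht1
  have s2 : ∑' n, t (2*n+1) = (I/(2*M)) * (Real.pi * cot (Real.pi * (I * z / M)) - 1 / (I * z / M)) := by
    rw [c2, ← tsum_mul_left]
    exact tsum_congr ht2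
  have s3 : ∑' n : ℕ, 4 * z / (4 * z^2 + (2 * (n:ℂ) + 1)^2 * M^2) = ∑' n, t (2*n) := by
    apply tsum_congr; intro n; simp [ht]
  rw [s3]
  have s4 : ∑' n, t (2*n) = (I * Real.pi/(2*M)) * (2 * cot (2 * (Real.pi * (I * z / M))) - cot (Real.pi * (I * z / M))) := by
    rw [eq_sub_of_add_eq hev, s1, s2]
    have e : Real.pi * (2 * I * z / M) = 2 * (Real.pi * (I * z / M)) := by ring
    rw [e]
    have hI := I_ne_zero
    field_simp
    ring
  have hsin : sin (2 * (Real.pi * (I * z / M))) ≠ 0 := by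
    have := sin_pi_mul_ne_zero hX
    convert this using 2
    ring
  have hid := cot_id hsin
  have ec : cosh (Real.pi * z / M) = cos (Real.pi * (I * z / M)) := by
    rw [← cos_mul_I]; congr 1; ring
  have es : sinh (Real.pi * z / M) * I = sin (Real.pi * (I * z / M)) := by
    rw [← sin_mul_I]; congr 1; ring
  rw [s4, ec, mul_assoc, hid, ← es]
  linear_combination (-Real.pi / (2*M) * sinh (Real.pi * z / M)) * I_sq


lemma integral_mul_exp {k : ℝ} (hk : 0 < k) :
    ∫ y in Set.Ioi (0:ℝ), y * Real.exp (-k * y) = 1 / k^2 := by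
  have := Real.integral_rpow_mul_exp_neg_mul_Ioi (a := 2) (r := k) (by norm_num) hk
  rw [show (2:ℝ) - 1 = 1 by norm_num, Real.Gamma_two] at this
  simp only [Real.rpow_one, mul_one] at this
  simp only [neg_mul]
  rw [this]
  norm_cast
  rw [div_pow, one_pow]

lemma sinh_series {x : ℝ} (hx : 0 < x) :
    HasSum (fun n : ℕ => 2 * exp (-(2 * (n:ℂ) + 1) * x)) (1 / sinh (x:ℂ)) := by
  have h1 : ‖exp (-2 * (x:ℂ))‖ < 1 := by
    rw [Complex.norm_exp]
    simp
    exact hx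
  have h2 := (hasSum_geometric_of_norm_lt_one h1).mul_left (2 * exp (-(x:ℂ)))
  have hs : sinh (x:ℂ) ≠ 0 := by
    have := csinh_ofReal_ne (M := 1) one_pos hx
    simpa using this
  have h3 : 2 * exp (-(x:ℂ)) * (1 - exp (-2*(x:ℂ)))⁻¹ = 1 / sinh (x:ℂ) := by
    have e : exp (-(x:ℂ)) * exp (x:ℂ) = 1 := by rw [← exp_add]; simp
    have e2 : exp (-2*(x:ℂ)) = exp (-(x:ℂ)) * exp (-(x:ℂ)) := by rw [← exp_add]; congr 1; ring
    have e3 : (1 - exp (-2*(x:ℂ))) = 2 * exp (-(x:ℂ)) * sinh x := by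
      rw [sinh, e2]; linear_combination -e
    rw [e3]
    have := exp_ne_zero (-(x:ℂ))
    field_simp
  rw [h3] at h2
  refine h2.congr_fun ?_ |> id
  intro n
  rw [← Complex.exp_nat_mul, mul_assoc, ← exp_add]
  congr 2; ring

lemma sin_integral {M : ℝ} (hM : 0 < M) {z : ℂ} (hz : |z.im| < M / 2) :
    ∫ y in Set.Ioi (0:ℝ), sin (2 * y * z) / sinh (M * y) =
      ∑' n : ℕ, 4 * z / (4 * z^2 + (2 * (n:ℂ) + 1)^2 * M^2) := by
  set F : ℕ → ℝ → ℂ := fun n y => sin (2*y*z) * (2 * exp (-(2 * (n:ℂ) + 1) * ((M*y:ℝ):ℂ))) with hF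
  set κ := M - 2*|z.im| with hκ
  have hκ0 : 0 < κ := by rw [hκ]; linarith
  have hFc : ∀ n, Continuous (F n) := by intro n; rw [hF]; fun_prop
  have hFb : ∀ n : ℕ, ∀ y : ℝ, 0 < y → ‖F n y‖ ≤ 4 * ‖z‖ * (y * Real.exp (-((n+1)*κ)*y)) := by
    intro n y hy
    rw [hF]
    simp only [norm_mul, Complex.norm_ofNat, Complex.norm_exp]
    have h1 := norm_sin_le (2*y*z)
    rw [abs_im_two_mul hy, norm_mul, norm_mul, Complex.norm_ofNat, Complex.norm_real, Real.norm_eq_abs, abs_of_pos hy] at h1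
    have h2 : (-(2 * (n:ℂ) + 1) * ((M*y:ℝ):ℂ)).re = -(2*n+1)*(M*y) := by
      have : (-(2 * (n:ℂ) + 1) * ((M*y:ℝ):ℂ)) = ((-(2*n+1)*(M*y) : ℝ) : ℂ) := by push_cast; ring
      rw [this, ofReal_re]
    rw [h2]
    calc ‖sin (2*y*z)‖ * (2 * Real.exp (-(2*n+1)*(M*y))) ≤ (2*y*‖z‖*Real.exp (2*y*|z.im|)) * (2 * Real.exp (-(2*n+1)*(M*y))) := by gcongr
      _ = 4 * ‖z‖ * (y * (Real.exp (2*y*|z.im|) * Real.exp (-(2*n+1)*(M*y)))) := by ring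
      _ ≤ 4 * ‖z‖ * (y * Real.exp (-((n+1)*κ)*y)) := by
        rw [← Real.exp_add]
        gcongr
        rw [hκ]
        have hn : (0:ℝ) ≤ n := n.cast_nonneg
        have h5 : 0 ≤ (n:ℝ) * M := by positivity
        have h6 : 0 ≤ (n:ℝ) * |z.im| := by positivity
        nlinarith [mul_nonneg h5 hy.le, mul_nonneg h6 hy.le]
  have hIb : ∀ n : ℕ, IntegrableOn (fun y : ℝ => 4 * ‖z‖ * (y * Real.exp (-((n+1)*κ)*y))) (Set.Ioi 0) := by
    intro n
    have := integrable_lin_exp (A := 0) (B := 1) (k := (n+1)*κ) (by positivity)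
    simp only [zero_add, one_mul] at this
    exact this.const_mul _
  have hFi : ∀ n, IntegrableOn (F n) (Set.Ioi 0) := by
    intro n
    refine Integrable.mono' (hIb n) (hFc n).aestronglyMeasurable ?_
    filter_upwards [ae_restrict_mem measurableSet_Ioi] with y hy
    exact hFb n y hy
  have hS : Summable fun n => ∫ y in Set.Ioi (0:ℝ), ‖F n y‖ := by
    have hs1 : Summable fun n : ℕ => (4 * ‖z‖ / κ^2) * (1 / ((n:ℝ)+1)^2) := by
      apply Summable.mul_left
      have := (summable_nat_add_iff 1).2 (Real.summable_one_div_nat_pow.2 (one_lt_two))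
      simpa using this
    refine Summable.of_nonneg_of_le (fun n => integral_nonneg fun y => norm_nonneg _) (fun n => ?_) hs1
    calc ∫ y in Set.Ioi (0:ℝ), ‖F n y‖ ≤ ∫ y in Set.Ioi (0:ℝ), 4 * ‖z‖ * (y * Real.exp (-((n+1)*κ)*y)) := by
          apply setIntegral_mono_on (hFi n).norm (hIb n) measurableSet_Ioi
          intro y hy; exact hFb n y hy
      _ = _ := by
        rw [integral_const_mul, integral_mul_exp (by positivity)]
        field_simp
  have hsum := hasSum_integral_of_summable_integral_norm hFi hS
  have hL : ∫ y in Set.Ioi (0:ℝ), ∑' n, F n y = ∫ y in Set.Ioi (0:ℝ), sin (2 * y * z) / sinh (M * y) := by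
    apply setIntegral_congr_fun measurableSet_Ioi
    intro y hy
    have hy0 : 0 < y := hy
    have := ((sinh_series (x := M*y) (by positivity)).mul_left (sin (2*y*z))).tsum_eq
    simp only [hF]
    rw [this, mul_one_div]; push_cast; rfl
  rw [← hL, ← hsum.tsum_eq]
  apply tsum_congr
  intro n
  have hz2 := abs_lt.1 hz
  have hn : (0:ℝ) ≤ n := n.cast_nonneg
  have hnM : 0 ≤ (n:ℝ)*M := by positivity
  set K : ℂ := (2*(n:ℂ)+1)*M with hK
  have hKre : K.re = (2*n+1)*M := by
    have : K = (((2*n+1)*M : ℝ):ℂ) := by rw [hK]; push_cast; ring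
    rw [this, ofReal_re]
  have hr1 : (-(2*z*I) - K).re < 0 := by
    simp [hKre]; nlinarith
  have hr2 : (2*z*I - K).re < 0 := by
    simp [hKre]; nlinarith
  have hFe : ∀ y : ℝ, F n y = I * (exp ((-(2*z*I) - K)*y) - exp ((2*z*I-K)*y)) := by
    intro y
    simp only [hF]
    rw [sin]
    have e1 : exp ((-(2*z*I) - K)*y) = exp (-(2*y*z)*I) * exp (-(2 * (n:ℂ) + 1) * ((M*y:ℝ):ℂ)) := by
      rw [← exp_add]; congr 1; rw [hK]; push_cast; ring
    have e2 : exp ((2*z*I - K)*y) = exp ((2*y*z)*I) * exp (-(2 * (n:ℂ) + 1) * ((M*y:ℝ):ℂ)) := by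
      rw [← exp_add]; congr 1; rw [hK]; push_cast; ring
    rw [e1, e2]; ring
  simp_rw [hFe]
  rw [integral_const_mul, integral_sub (integrableOn_exp_mul_complex_Ioi hr1 0) (integrableOn_exp_mul_complex_Ioi hr2 0),
    integral_exp_mul_complex_Ioi hr1, integral_exp_mul_complex_Ioi hr2]
  have n1 : (-(2*z*I) - K) ≠ 0 := by intro h; rw [h] at hr1; simp at hr1
  have n2 : (2*z*I - K) ≠ 0 := by intro h; rw [h] at hr2; simp at hr2
  have e : 4 * z^2 + (2 * (n:ℂ) + 1)^2 * M^2 = (-(2*z*I) - K) * (2*z*I - K) := by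
    rw [hK]; ring_nf; rw [I_sq]; ring
  rw [e]
  simp only [ofReal_zero, mul_zero, exp_zero]
  have e5 : (-(2*z*I) - K) - (2*z*I - K) = -4*z*I := by ring
  generalize (-(2*z*I) - K) = p at *
  generalize (2*z*I - K) = q at *
  have : I * (-1 / p - -1 / q) = I * (p - q) / (p * q) := by field_simp; ring
  rw [this, e5]
  congr 1
  linear_combination (-4*z)*I_sq

lemma sin_integral_eq {M : ℝ} (hM : 0 < M) {z : ℂ} (hz : |z.im| < M / 2) :
    (∫ y in Set.Ioi (0:ℝ), sin (2 * y * z) / sinh (M * y)) * cosh (Real.pi * z / M) =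
      Real.pi / (2 * M) * sinh (Real.pi * z / M) := by
  by_cases hz0 : z = 0
  · simp [hz0]
  · rw [sin_integral hM hz, summable_odd_cot hM hz hz0]

lemma LM_closed {M : ℝ} (hM : 0 < M) :
    ∃ c : ℂ, c ≠ 0 ∧ ∀ z : ℂ, |z.im| < M/2 → exp (LM M z) * cosh (Real.pi * z / M) = c := by
  refine ⟨exp (LM M 0) * cosh (Real.pi * 0 / M), by simp [exp_ne_zero], fun z hz => ?_⟩
  have hder : ∀ w : ℂ, |w.im| < M/2 → HasDerivAt (fun w => exp (LM M w) * cosh (Real.pi * w / M)) 0 w := by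
    intro w hw
    have h1 := (LM_hasDerivAt hM hw).cexp
    have h2 : HasDerivAt (fun w : ℂ => cosh (Real.pi * w / M)) (sinh (Real.pi * w / M) * (Real.pi * 1 / M)) w :=
      (((hasDerivAt_id w).const_mul (Real.pi:ℂ)).div_const (M:ℂ)).ccosh
    refine (h1.mul h2).congr_deriv ?_
    have h3 := sin_integral_eq hM hw
    rw [integral_const_mul]
    have hM' : (M:ℂ) ≠ 0 := by exact_mod_cast hM.ne'
    have : Real.pi * 1 / (M:ℂ) = 2 * (Real.pi / (2*M)) := by field_simp
    rw [this]
    linear_combination (-2 * exp (LM M w)) * h3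
  refine IsOpen.is_const_of_deriv_eq_zero
    (f := fun w => exp (LM M w) * cosh (Real.pi * w / M)) (x := z) (y := 0) (s := {w : ℂ | |w.im| < M/2}) (isOpen_strip _) (convex_strip _).isPreconnected ?_ ?_ hz
    (show |(0:ℂ).im| < M/2 by simp [hM])
  · intro w hw; exact (hder w hw).differentiableAt.differentiableWithinAt
  · intro w hw; exact (hder w hw).deriv


noncomputable def chi (p m b : ℝ) (y : ℝ) : ℂ :=
  (1 / (y:ℂ)) * (sinh (b * y) / (sinh (p * y) * sinh (m * y)) -
    (b * (p + m) / (p * m)) / sinh (((p + m : ℝ):ℂ) * y))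

noncomputable def Rf (p m b : ℝ) (z : ℂ) : ℂ :=
  ∫ y in Set.Ioi (0:ℝ), cos (2 * y * z) * chi p m b y

noncomputable def Wf (p m b : ℝ) (z : ℂ) : ℂ :=
  exp ((b * (p + m) / (p * m)) * LM (p + m) z + Rf p m b z)

lemma chi_cont {p m b : ℝ} (hp : 0 < p) (hm : 0 < m) :
    ContinuousOn (chi p m b) (Set.Ioi 0) := by
  unfold chi
  apply ContinuousOn.mul
  · apply ContinuousOn.div continuousOn_const (by fun_prop)
    intro y hy; exact_mod_cast (ne_of_gt hy)
  · apply ContinuousOn.sub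
    · apply ContinuousOn.div (by fun_prop) (by fun_prop)
      intro y hy
      exact mul_ne_zero (csinh_ofReal_ne hp hy) (csinh_ofReal_ne hm hy)
    · exact contOn_div_sinh (by positivity) continuous_const

lemma norm_csinh_le {b y : ℝ} (hb : 0 < b) (hy : 0 < y) : ‖sinh ((b:ℂ) * y)‖ ≤ Real.exp (b*y) := by
  rw [norm_csinh hb hy, Real.sinh_eq]
  have := Real.exp_pos (b*y)
  have := Real.exp_pos (-(b*y))
  linarith

lemma chi_bound {p m b κ : ℝ} (hp : 0 < p) (hm : 0 < m) (hb : 0 < b) (hκ : κ < p + m - b) :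
    ∃ C > 0, ∀ y : ℝ, 0 < y → ‖chi p m b y‖ ≤ C * Real.exp (-κ * y) := by
  set ε := (p + m - b - κ)/2 with hε
  have hε0 : 0 < ε := by rw [hε]; linarith
  obtain ⟨C1, hC1, h1⟩ := div_sinh_le' (M := p) (M' := p - ε) hp (by linarith)
  obtain ⟨C2, hC2, h2⟩ := div_sinh_le' (M := m) (M' := m - ε) hm (by linarith)
  obtain ⟨C3, hC3, h3⟩ := div_sinh_le' (M := p+m) (M' := κ) (by positivity) (by linarith)
  set b' : ℝ := b * (p + m) / (p * m) with hb'
  have hb'0 : 0 < b' := by positivity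
  have hb'c : (b * (p + m) / (p * m) : ℂ) = (b' : ℂ) := by rw [hb']; push_cast; rfl
  have hpc : (p:ℂ) ≠ 0 := by exact_mod_cast hp.ne'
  have hmc : (m:ℂ) ≠ 0 := by exact_mod_cast hm.ne'
  have hpm : ((p+m:ℝ):ℂ) ≠ 0 := by exact_mod_cast (by positivity : p + m ≠ 0)
  obtain ⟨D, δ, hD, hδ, hq⟩ := even_quad
    (f := fun w => Sf b w / (Sf p w * Sf m w) - b' / Sf ((p+m:ℝ):ℂ) w)
    (by
      apply AnalyticAt.sub
      · apply (Sf_analytic _).div ((Sf_analytic _).mul (Sf_analytic _))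
        rw [Pi.mul_apply, Sf_zero, Sf_zero]; exact mul_ne_zero hpc hmc
      · apply analyticAt_const.div (Sf_analytic _)
        rw [Sf_zero]; exact hpm)
    (by intro w; simp only [Sf_even])
    (by
      simp only [Sf_zero]
      rw [hb']; push_cast; push_cast at hpm; field_simp; ring)
  refine ⟨D * Real.exp (|κ| * δ) + (C1 * C2 / δ^3 + b' * C3 / δ^2), by positivity, fun y hy => ?_⟩
  have hyc : (y:ℂ) ≠ 0 := by exact_mod_cast hy.ne'
  rcases lt_or_ge y δ with hyd | hyd
  · have h := hq y hy hyd
    have e : chi p m b y = (Sf b y / (Sf p y * Sf m y) - b' / Sf ((p+m:ℝ):ℂ) y) / (y:ℂ)^2 := by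
      rw [chi, Sf_ne _ hyc, Sf_ne _ hyc, Sf_ne _ hyc, Sf_ne _ hyc, hb'c]
      have := csinh_ofReal_ne hp hy
      have := csinh_ofReal_ne hm hy
      have := csinh_ofReal_ne (M := p + m) (by positivity) hy
      field_simp
    rw [e, norm_div, norm_pow, Complex.norm_real, Real.norm_eq_abs, abs_of_pos hy, div_le_iff₀ (by positivity)]
    refine h.trans ?_
    gcongr
    have h4 : 1 ≤ Real.exp (|κ| * δ) * Real.exp (-κ * y) := by
      rw [← Real.exp_add]
      apply Real.one_le_exp
      have : κ * y ≤ |κ| * δ := by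
        calc κ * y ≤ |κ| * y := by gcongr; exact le_abs_self _
          _ ≤ |κ| * δ := by gcongr
      linarith
    calc D = D * 1 := by ring
      _ ≤ D * (Real.exp (|κ| * δ) * Real.exp (-κ * y)) := by gcongr
      _ = D * Real.exp (|κ| * δ) * Real.exp (-κ * y) + 0 := by ring
      _ ≤ D * Real.exp (|κ| * δ) * Real.exp (-κ * y) + (C1 * C2 / δ^3 + b' * C3 / δ^2) * Real.exp (-κ * y) := by
        gcongr; positivity
      _ = _ := by ring
  · have sp : 0 < Real.sinh (p*y) := Real.sinh_pos_iff.2 (by positivity)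
    have sm : 0 < Real.sinh (m*y) := Real.sinh_pos_iff.2 (by positivity)
    have sM : 0 < Real.sinh ((p+m)*y) := Real.sinh_pos_iff.2 (by positivity)
    have h1 := h1 y hy
    have h2 := h2 y hy
    have h3 := h3 y hy
    have hbs := norm_csinh_le hb hy
    rw [chi, hb'c, mul_sub]
    refine (norm_sub_le _ _).trans ?_
    simp only [norm_mul, norm_div, norm_one, Complex.norm_real, Real.norm_eq_abs, abs_of_pos hy, abs_of_pos hb'0, norm_csinh hp hy, norm_csinh hm hy, norm_csinh hb hy]
    rw [norm_csinh (M := p+m) (by positivity) hy]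
    rw [norm_csinh hb hy] at hbs
    have a1 : 1/y * (Real.sinh (b*y) / (Real.sinh (p*y) * Real.sinh (m*y))) ≤ C1 * C2 / δ^3 * Real.exp (-κ*y) := by
      calc _ = Real.sinh (b*y) * (y / Real.sinh (p*y)) * (y / Real.sinh (m*y)) / y^3 := by field_simp
        _ ≤ Real.exp (b*y) * (C1 * Real.exp (-((p-ε)*y))) * (C2 * Real.exp (-((m-ε)*y))) / δ^3 := by gcongr
        _ = C1 * C2 / δ^3 * (Real.exp (b*y) * Real.exp (-((p-ε)*y)) * Real.exp (-((m-ε)*y))) := by ring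
        _ = _ := by
          rw [← Real.exp_add, ← Real.exp_add]; congr 2; rw [hε]; ring
    have a2 : 1/y * (b' / Real.sinh ((p+m)*y)) ≤ b' * C3 / δ^2 * Real.exp (-κ*y) := by
      calc _ = b' * (y / Real.sinh ((p+m)*y)) / y^2 := by field_simp
        _ ≤ b' * (C3 * Real.exp (-(κ*y))) / δ^2 := by gcongr
        _ = _ := by rw [neg_mul]; ring
    have a3 : 0 ≤ D * Real.exp (|κ| * δ) * Real.exp (-κ*y) := by positivity
    linarith

lemma cos_chi_meas {p m b : ℝ} (hp : 0 < p) (hm : 0 < m) (z : ℂ) :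
    AEStronglyMeasurable (fun y : ℝ => cos (2*y*z) * chi p m b y) (volume.restrict (Set.Ioi 0)) := by
  apply ContinuousOn.aestronglyMeasurable _ measurableSet_Ioi
  exact ContinuousOn.mul (by fun_prop) (chi_cont hp hm)

lemma cos_chi_bound {p m b η : ℝ} (hp : 0 < p) (hm : 0 < m) (hb : 0 < b) (hη : η < (p + m - b)/2) :
    ∃ B : ℝ → ℝ, IntegrableOn B (Set.Ioi 0) ∧ ∀ y : ℝ, 0 < y → ∀ z : ℂ, |z.im| ≤ η →
      ‖cos (2*y*z) * chi p m b y‖ ≤ B y := by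
  set κ := (2*η + (p+m-b))/2 with hκ
  obtain ⟨C, hC, h⟩ := chi_bound (κ := κ) hp hm hb (by rw [hκ]; linarith)
  refine ⟨fun y => (C + 0 * y) * Real.exp (-(κ - 2*η)*y), integrable_lin_exp (by rw [hκ]; linarith), ?_⟩
  intro y hy z hz
  have h1 := norm_cos_le' (2*y*z)
  rw [abs_im_two_mul hy] at h1
  rw [norm_mul]
  calc _ ≤ Real.exp (2*y*η) * (C * Real.exp (-κ*y)) := by
        gcongr
        · refine h1.trans ?_
          gcongr
        · exact h y hy
    _ = C * (Real.exp (2*y*η) * Real.exp (-κ*y)) := by ring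
    _ = _ := by simp only [zero_mul, add_zero]; rw [← Real.exp_add]; congr 2; ring

lemma cos_chi_integrable {p m b : ℝ} (hp : 0 < p) (hm : 0 < m) (hb : 0 < b) {z : ℂ}
    (hz : |z.im| < (p + m - b)/2) :
    IntegrableOn (fun y : ℝ => cos (2*y*z) * chi p m b y) (Set.Ioi 0) := by
  obtain ⟨B, hB, h⟩ := cos_chi_bound hp hm hb hz
  refine Integrable.mono' hB (cos_chi_meas hp hm z) ?_
  filter_upwards [ae_restrict_mem measurableSet_Ioi] with y hy
  exact h y hy z le_rfl

lemma strip_ball {η : ℝ} {z : ℂ} (hz : |z.im| < η) :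
    ∃ r > 0, ∃ η' < η, ∀ w ∈ Metric.ball z r, |w.im| ≤ η' := by
  refine ⟨(η - |z.im|)/2, by linarith, (η + |z.im|)/2, by linarith, fun w hw => ?_⟩
  rw [Metric.mem_ball, dist_eq_norm] at hw
  have h1 := Complex.abs_im_le_norm (w - z)
  rw [sub_im] at h1
  have h2 := abs_add_le z.im (w.im - z.im)
  rw [add_sub_cancel] at h2
  linarith

lemma Rf_diff {p m b : ℝ} (hp : 0 < p) (hm : 0 < m) (hb : 0 < b) :
    DifferentiableOn ℂ (Rf p m b) {z | |z.im| < (p+m-b)/2} := by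
  apply holo_integral
  · intro z _; exact cos_chi_meas hp hm z
  · refine Filter.Eventually.of_forall fun y => ?_
    apply Differentiable.differentiableOn
    fun_prop
  · intro z hz
    obtain ⟨r, hr, η', hη', hball⟩ := strip_ball hz
    obtain ⟨B, hB, h⟩ := cos_chi_bound hp hm hb hη'
    refine ⟨r, hr, fun w hw => (hball w hw).trans_lt hη', B, hB, ?_⟩
    filter_upwards [ae_restrict_mem measurableSet_Ioi] with y hy w hw
    exact h y hy w (hball w hw)

lemma Wf_diff {p m b : ℝ} (hp : 0 < p) (hm : 0 < m) (hb : 0 < b) :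
    DifferentiableOn ℂ (Wf p m b) {z | |z.im| < (p+m-b)/2} := by
  apply DifferentiableOn.cexp
  apply DifferentiableOn.add _ (Rf_diff hp hm hb)
  apply DifferentiableOn.const_mul
  intro z hz
  have hz' : |z.im| < (p+m-b)/2 := hz
  exact (LM_hasDerivAt (M := p+m) (by positivity) (by linarith)).differentiableAt.differentiableWithinAt

lemma norm_cosh_ge (w : ℂ) {θ : ℝ} (h : |w.im| ≤ θ) (hθ : θ < Real.pi/2) :
    Real.cos θ * (Real.exp |w.re| / 2) ≤ ‖cosh w‖ := by
  have e : (cosh w).re = Real.cosh w.re * Real.cos w.im := by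
    conv_lhs => rw [← re_add_im w, cosh_add, cosh_mul_I, sinh_mul_I, ← ofReal_cosh, ← ofReal_sinh, ← ofReal_cos, ← ofReal_sin]
    simp
    left; exact Complex.cos_ofReal_re _
  have hθ0 : 0 ≤ θ := (abs_nonneg _).trans h
  have hc0 : 0 ≤ Real.cos θ := Real.cos_nonneg_of_neg_pi_div_two_le_of_le (by linarith [Real.pi_pos]) hθ.le
  have hc : Real.cos θ ≤ Real.cos w.im := by
    rw [← Real.cos_abs w.im]
    exact Real.cos_le_cos_of_nonneg_of_le_pi (abs_nonneg _) (by linarith [Real.pi_pos]) h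
  have hh : Real.exp |w.re| / 2 ≤ Real.cosh w.re := by
    rw [← Real.cosh_abs, Real.cosh_eq]
    have := Real.exp_pos (-|w.re|)
    linarith
  calc _ ≤ Real.cos w.im * Real.cosh w.re := by gcongr; exact hc0.trans hc
    _ = (cosh w).re := by rw [e]; ring
    _ ≤ _ := (le_abs_self _).trans (Complex.abs_re_le_norm _)

lemma Wf_decay {p m b η : ℝ} (hp : 0 < p) (hm : 0 < m) (hb : 0 < b) (hη0 : 0 ≤ η) (hη : η < (p + m - b)/2) :
    ∃ C k : ℝ, 0 < C ∧ 0 < k ∧ ∀ z : ℂ, |z.im| ≤ η → ‖Wf p m b z‖ ≤ C * Real.exp (-k * |z.re|) := by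
  have hM : 0 < p + m := by positivity
  obtain ⟨B, hB, h⟩ := cos_chi_bound hp hm hb hη
  obtain ⟨c, hc0, hc⟩ := LM_closed hM
  set b' : ℝ := b * (p + m) / (p * m) with hb'
  have hb'0 : 0 < b' := by positivity
  have hb'c : (b * (p + m) / (p * m) : ℂ) = (b' : ℂ) := by rw [hb']; push_cast; rfl
  set θ := Real.pi * η / (p+m) with hθ
  have hθ2 : θ < Real.pi / 2 := by
    rw [hθ, div_lt_iff₀ hM]
    nlinarith [Real.pi_pos]
  have hθ0 : 0 ≤ θ := by rw [hθ]; have := Real.pi_pos; positivity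
  have hcos : 0 < Real.cos θ := Real.cos_pos_of_mem_Ioo ⟨by linarith [Real.pi_pos], hθ2⟩
  have hcn : 0 < ‖c‖ := norm_pos_iff.2 hc0
  refine ⟨(2 * ‖c‖ / Real.cos θ) ^ b' * Real.exp (∫ y in Set.Ioi (0:ℝ), B y), Real.pi/(p+m) * b',
    by positivity, by have := Real.pi_pos; positivity, fun z hz => ?_⟩
  have hR : ‖Rf p m b z‖ ≤ ∫ y in Set.Ioi (0:ℝ), B y := by
    apply norm_integral_le_of_norm_le hB
    filter_upwards [ae_restrict_mem measurableSet_Ioi] with y hy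
    exact h y hy z hz
  have hL := hc z (by linarith)
  have hw : |(Real.pi * z / ((p+m:ℝ):ℂ)).im| ≤ θ := by
    have : Real.pi * z / ((p+m:ℝ):ℂ) = ((Real.pi/(p+m) : ℝ):ℂ) * z := by push_cast; ring
    rw [this, im_ofReal_mul, abs_mul, abs_of_pos (by have := Real.pi_pos; positivity), hθ, mul_div_right_comm]
    have := Real.pi_pos
    gcongr
  have hwr : |(Real.pi * z / ((p+m:ℝ):ℂ)).re| = Real.pi/(p+m) * |z.re| := by
    have : Real.pi * z / ((p+m:ℝ):ℂ) = ((Real.pi/(p+m) : ℝ):ℂ) * z := by push_cast; ring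
    rw [this, re_ofReal_mul, abs_mul, abs_of_pos (by have := Real.pi_pos; positivity)]
  have hco := norm_cosh_ge _ hw hθ2
  rw [hwr] at hco
  have hn : ‖exp (LM (p+m) z)‖ ≤ (2 * ‖c‖ / Real.cos θ) * Real.exp (-(Real.pi/(p+m) * |z.re|)) := by
    have h1 := congrArg norm hL
    rw [norm_mul] at h1
    rw [Real.exp_neg, ← div_eq_mul_inv, div_div, le_div_iff₀ (by positivity)]
    calc ‖exp (LM (p+m) z)‖ * (Real.cos θ * Real.exp (Real.pi/(p+m) * |z.re|))
        = 2 * (‖exp (LM (p+m) z)‖ * (Real.cos θ * (Real.exp (Real.pi/(p+m) * |z.re|) / 2))) := by ring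
      _ ≤ 2 * (‖exp (LM (p+m) z)‖ * ‖cosh (Real.pi * z / ((p+m:ℝ):ℂ))‖) := by gcongr
      _ = 2 * ‖c‖ := by rw [h1]
  rw [Wf, exp_add, norm_mul, hb'c]
  have e1 : ‖exp (b' * LM (p+m) z)‖ = ‖exp (LM (p+m) z)‖ ^ b' := by
    rw [Complex.norm_exp, Complex.norm_exp, re_ofReal_mul, ← Real.exp_mul, mul_comm]
  have e2 : ‖exp (Rf p m b z)‖ ≤ Real.exp (∫ y in Set.Ioi (0:ℝ), B y) := by
    rw [Complex.norm_exp]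
    exact Real.exp_le_exp.2 (((le_abs_self _).trans (Complex.abs_re_le_norm _)).trans hR)
  rw [e1]
  calc _ ≤ ((2 * ‖c‖ / Real.cos θ) * Real.exp (-(Real.pi/(p+m) * |z.re|))) ^ b' * Real.exp (∫ y in Set.Ioi (0:ℝ), B y) := by
        gcongr
    _ = _ := by
      rw [Real.mul_rpow (by positivity) (by positivity), ← Real.exp_mul]
      rw [show -(Real.pi/(p+m) * |z.re|) * b' = -(Real.pi/(p+m) * b') * |z.re| by ring]
      ring


noncomputable def gint (p m : ℝ) (z : ℂ) (y : ℝ) : ℂ :=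
  (1 / (y : ℂ)) * (sin (2 * (y : ℂ) * z) / (2 * sinh ((p : ℂ) * (y : ℂ)) * sinh ((m : ℂ) * (y : ℂ))) -
        z / ((p : ℂ) * (m : ℂ) * (y : ℂ)))

lemma sinh_two_I (z w : ℂ) : sinh (2 * I * z * w) = I * sin (2 * w * z) := by
  rw [show 2 * I * z * w = (2 * w * z) * I by ring, sinh_mul_I]; ring

lemma gint_integrable {p m : ℝ} (hp : 0 < p) (hm : 0 < m) {z : ℂ} (hz : |z.im| < (p + m)/2) :
    IntegrableOn (gint p m z) (Set.Ioi 0) := by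
  set ε := ((p + m)/2 - |z.im|)/2 with hε
  have hε0 : 0 < ε := by rw [hε]; linarith
  have hpc : (p:ℂ) ≠ 0 := by exact_mod_cast hp.ne'
  have hmc : (m:ℂ) ≠ 0 := by exact_mod_cast hm.ne'
  obtain ⟨C1, hC1, h1⟩ := div_sinh_le' (M := p) (M' := p - ε) hp (by linarith)
  obtain ⟨C2, hC2, h2⟩ := div_sinh_le' (M := m) (M' := m - ε) hm (by linarith)
  have key := int_gen (A := fun y => sin (2 * y * z) / (2 * sinh (p * y) * sinh (m * y))) (κ := z / (p * m))
    (f := fun w => (-I * Sf (2 * I * z) w) / (2 * Sf p w * Sf m w) - z / (p * m)) (C := C1 * C2) (k := 2 * ε)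
    ?_ ?_ ?_ ?_ ?_ ?_ ?_
  · refine key.congr_fun ?_ measurableSet_Ioi
    intro y hy
    simp only [gint, div_div]
  · refine ContinuousOn.div (by fun_prop) (by fun_prop) ?_
    intro y hy
    exact mul_ne_zero (mul_ne_zero two_ne_zero (csinh_ofReal_ne hp hy)) (csinh_ofReal_ne hm hy)
  · refine AnalyticAt.sub ?_ analyticAt_const
    refine (analyticAt_const.mul (Sf_analytic _)).div ((analyticAt_const.mul (Sf_analytic _)).mul (Sf_analytic _)) ?_
    simp only [Sf_zero]
    exact mul_ne_zero (mul_ne_zero two_ne_zero hpc) hmc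
  · intro w; simp only [Sf_even]
  · simp only [Sf_zero]
    field_simp
    ring_nf; simp
  · intro y hy
    have hy' : (y:ℂ) ≠ 0 := by exact_mod_cast hy.ne'
    have := csinh_ofReal_ne hp hy
    have := csinh_ofReal_ne hm hy
    simp only [Sf_ne _ hy', sinh_two_I]
    field_simp
    ring_nf; simp
  · positivity
  · intro y hy
    have sp : 0 < Real.sinh (p*y) := Real.sinh_pos_iff.2 (by positivity)
    have sm : 0 < Real.sinh (m*y) := Real.sinh_pos_iff.2 (by positivity)
    rw [norm_div, norm_mul, norm_mul, norm_csinh hp hy, norm_csinh hm hy, Complex.norm_ofNat]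
    have h3 := norm_sin_le' (2*y*z)
    rw [abs_im_two_mul hy] at h3
    calc y^2 * (‖sin (2*y*z)‖ / (2 * Real.sinh (p*y) * Real.sinh (m*y)))
        = (1/2) * (‖sin (2*y*z)‖ * (y / Real.sinh (p*y)) * (y / Real.sinh (m*y))) := by field_simp
      _ ≤ 1 * (Real.exp (2*y*|z.im|) * (C1 * Real.exp (-((p-ε)*y))) * (C2 * Real.exp (-((m-ε)*y)))) := by
        gcongr
        · norm_num
        · exact h1 y hy
        · exact h2 y hy
      _ = C1 * C2 * (Real.exp (2*y*|z.im|) * Real.exp (-((p-ε)*y)) * Real.exp (-((m-ε)*y))) := by ring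
      _ = C1 * C2 * 1 * Real.exp (-(2*ε) * y) := by
        rw [← Real.exp_add, ← Real.exp_add, mul_one]; congr 2; rw [hε]; ring
      _ ≤ _ := by gcongr; linarith

lemma im_sub_half (z : ℂ) (b : ℝ) : (z - I * b / 2).im = z.im - b/2 := by
  simp

lemma im_add_half (z : ℂ) (b : ℝ) : (z + I * b / 2).im = z.im + b/2 := by
  simp

lemma W_ident {p m b : ℝ} (hp : 0 < p) (hm : 0 < m) (hb : 0 < b) {z : ℂ}
    (hz : |z.im| < (p + m - b)/2) :
    Ghyp p m (z - I * b / 2) / Ghyp p m (z + I * b / 2) = Wf p m b z := by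
  have hpc : (p:ℂ) ≠ 0 := by exact_mod_cast hp.ne'
  have hmc : (m:ℂ) ≠ 0 := by exact_mod_cast hm.ne'
  have hpmc : (p:ℂ) + m ≠ 0 := by exact_mod_cast (by positivity : p + m ≠ 0)
  have hz' := abs_lt.1 hz
  have i1 : IntegrableOn (gint p m (z - I * b / 2)) (Set.Ioi 0) := by
    apply gint_integrable hp hm
    rw [im_sub_half, abs_lt]; constructor <;> linarith
  have i2 : IntegrableOn (gint p m (z + I * b / 2)) (Set.Ioi 0) := by
    apply gint_integrable hp hm
    rw [im_add_half, abs_lt]; constructor <;> linarith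
  have i3 := Lint_integrable (M := p + m) (z := z) (by positivity) (by linarith)
  have i4 := cos_chi_integrable hp hm hb hz
  rw [Ghyp, Ghyp, ← exp_sub, Wf]
  congr 1
  change I * (∫ y in Set.Ioi (0:ℝ), gint p m (z - I * b / 2) y) - I * (∫ y in Set.Ioi (0:ℝ), gint p m (z + I * b / 2) y) = _
  rw [← mul_sub, ← integral_sub i1 i2, LM, Rf, ← integral_const_mul, ← integral_const_mul,
    ← integral_add (i3.const_mul _) i4]
  refine setIntegral_congr_fun measurableSet_Ioi ?_
  intro y hy
  have hy' : (y:ℂ) ≠ 0 := by exact_mod_cast (ne_of_gt hy)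
  have s1 := csinh_ofReal_ne hp hy
  have s2 := csinh_ofReal_ne hm hy
  have s3 := csinh_ofReal_ne (M := p + m) (by positivity) hy
  have e1 : sin (2 * y * (z - I * b / 2)) = sin (2*y*z) * cosh (b * y) - cos (2*y*z) * (sinh (b*y) * I) := by
    rw [show 2 * y * (z - I * b / 2) = 2*y*z - (b * y) * I by ring, sin_sub, cos_mul_I, sin_mul_I]
  have e2 : sin (2 * y * (z + I * b / 2)) = sin (2*y*z) * cosh (b * y) + cos (2*y*z) * (sinh (b*y) * I) := by
    rw [show 2 * y * (z + I * b / 2) = 2*y*z + (b * y) * I by ring, sin_add, cos_mul_I, sin_mul_I]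
  simp only [gint, Lint, chi, e1, e2]
  push_cast at s3 ⊢
  field_simp
  ring_nf
  simp only [I_sq]
  ring

lemma W_func {p m b : ℝ} (hp : 0 < p) (hm : 0 < m) (hb : 0 < b) (hbp : b < p) (u : ℝ) :
    Wf p m b (u - I * m / 2) * cosh (Real.pi * (u - I * b / 2) / p) =
      Wf p m b (u + I * m / 2) * cosh (Real.pi * (u + I * b / 2) / p) := by
  have hpc : (p:ℂ) ≠ 0 := by exact_mod_cast hp.ne'
  have hmc : (m:ℂ) ≠ 0 := by exact_mod_cast hm.ne'
  have hpmc : (p:ℂ) + m ≠ 0 := by exact_mod_cast (by positivity : p + m ≠ 0)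
  have im1 : |((u:ℂ) - I * m / 2).im| < (p + m - b)/2 := by
    rw [im_sub_half, ofReal_im, abs_lt]; constructor <;> linarith
  have im2 : |((u:ℂ) + I * m / 2).im| < (p + m - b)/2 := by
    rw [im_add_half, ofReal_im, abs_lt]; constructor <;> linarith
  have im3 : |((u:ℂ) - I * b / 2).im| < p/2 := by
    rw [im_sub_half, ofReal_im, abs_lt]; constructor <;> linarith
  have im4 : |((u:ℂ) + I * b / 2).im| < p/2 := by
    rw [im_add_half, ofReal_im, abs_lt]; constructor <;> linarith
  have i1 := Lint_integrable (M := p + m) (by positivity) (im1.trans_le (by linarith))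
  have i2 := Lint_integrable (M := p + m) (by positivity) (im2.trans_le (by linarith))
  have i3 := cos_chi_integrable hp hm hb im1
  have i4 := cos_chi_integrable hp hm hb im2
  have i5 := Lint_integrable hp im3
  have i6 := Lint_integrable hp im4
  have i7 : IntegrableOn (fun y => (b * (p + m) / (p * m) : ℂ) * Lint (p + m) (u - I * m / 2) y +
      cos (2 * y * (u - I * m / 2)) * chi p m b y) (Set.Ioi 0) := (i1.const_mul _).add i3
  have i8 : IntegrableOn (fun y => (b * (p + m) / (p * m) : ℂ) * Lint (p + m) (u + I * m / 2) y +
      cos (2 * y * (u + I * m / 2)) * chi p m b y) (Set.Ioi 0) := (i2.const_mul _).add i4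
  have key : ((b * (p + m) / (p * m)) * LM (p + m) (u - I * m / 2) + Rf p m b (u - I * m / 2)) + LM p (u + I * b / 2)
    = ((b * (p + m) / (p * m)) * LM (p + m) (u + I * m / 2) + Rf p m b (u + I * m / 2)) + LM p (u - I * b / 2) := by
    simp only [LM, Rf, ← integral_const_mul]
    rw [← integral_add (i1.const_mul _) i3, ← integral_add (i2.const_mul _) i4,
      ← integral_add i7 i6, ← integral_add i8 i5]
    refine setIntegral_congr_fun measurableSet_Ioi ?_
    intro y hy
    have hy' : (y:ℂ) ≠ 0 := by exact_mod_cast (ne_of_gt hy)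
    have s1 := csinh_ofReal_ne hp hy
    have s2 := csinh_ofReal_ne hm hy
    have s3 := csinh_ofReal_ne (M := p + m) (by positivity) hy
    have e1 : ∀ b : ℝ, cos (2 * y * (u - I * b / 2)) = cos (2*y*u) * cosh (b * y) + sin (2*y*u) * (sinh (b*y) * I) := by
      intro b
      rw [show 2 * y * (u - I * b / 2) = 2*y*u - (b * y) * I by ring, cos_sub, cos_mul_I, sin_mul_I]
    have e2 : ∀ b : ℝ, cos (2 * y * (u + I * b / 2)) = cos (2*y*u) * cosh (b * y) - sin (2*y*u) * (sinh (b*y) * I) := by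
      intro b
      rw [show 2 * y * (u + I * b / 2) = 2*y*u + (b * y) * I by ring, cos_add, cos_mul_I, sin_mul_I]
    simp only [Lint, chi, e1, e2]
    push_cast at s3 ⊢
    field_simp
    ring
  obtain ⟨c, hc0, hc⟩ := LM_closed hp
  have h3 := hc _ im3
  have h4 := hc _ im4
  have hE : Wf p m b (u - I * m / 2) * exp (LM p (u + I * b / 2)) =
      Wf p m b (u + I * m / 2) * exp (LM p (u - I * b / 2)) := by
    rw [Wf, Wf, ← exp_add, ← exp_add, key]
  have n3 : exp (LM p (u - I * b / 2)) ≠ 0 := exp_ne_zero _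
  have n4 : exp (LM p (u + I * b / 2)) ≠ 0 := exp_ne_zero _
  have := mul_ne_zero n3 n4
  apply mul_right_cancel₀ this
  calc _ = (Wf p m b (u - I * m / 2) * exp (LM p (u + I * b / 2))) * (exp (LM p (u - I * b / 2)) * cosh (Real.pi * (u - I * b / 2) / p)) := by ring
    _ = (Wf p m b (u + I * m / 2) * exp (LM p (u - I * b / 2))) * (exp (LM p (u + I * b / 2)) * cosh (Real.pi * (u + I * b / 2) / p)) := by rw [hE, h3, h4]
    _ = _ := by ring


lemma integrable_exp_abs {k : ℝ} (hk : 0 < k) : Integrable (fun t : ℝ => Real.exp (-k * |t|)) := by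
  have hf : IntegrableOn (fun t : ℝ => Real.exp (-k * |t|)) (Set.Ioi 0) := by
    refine (integrable_lin_exp (A := 1) (B := 0) hk).congr_fun ?_ measurableSet_Ioi
    intro t ht
    simp only [abs_of_pos (show (0:ℝ) < t from ht)]
    ring
  have int_Iic : IntegrableOn (fun t : ℝ => Real.exp (-k * |t|)) (Set.Iic 0) := by
    rw [← Measure.map_neg_eq_self (volume : Measure ℝ)]
    let m : MeasurableEmbedding fun x : ℝ => -x := (Homeomorph.neg ℝ).measurableEmbedding
    rw [m.integrableOn_map_iff]
    simp_rw [Function.comp_def, abs_neg, Set.neg_preimage, Set.neg_Iic, neg_zero]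
    rw [integrableOn_Ici_iff_integrableOn_Ioi]
    exact hf
  rw [← integrableOn_univ, ← Set.Iic_union_Ioi (a := (0:ℝ))]
  exact int_Iic.union hf

noncomputable def Kint (p m b : ℝ) (y : Fin 2 → ℝ) (s0 s1 : ℂ) (t : ℝ) : ℂ :=
  exp (I * (alphaPar p m : ℂ) * (t : ℂ) * ((y 0 : ℂ) - (y 1 : ℂ))) *
    (Wf p m b (s0 - t) * Wf p m b (s1 - t))

noncomputable def Kf (p m b : ℝ) (y : Fin 2 → ℝ) (s0 s1 : ℂ) : ℂ := ∫ t : ℝ, Kint p m b y s0 s1 t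

lemma Wf_shift_cont {p m b : ℝ} (hp : 0 < p) (hm : 0 < m) (hb : 0 < b) {s : ℂ}
    (hs : |s.im| < (p + m - b)/2) : Continuous (fun t : ℝ => Wf p m b (s - t)) := by
  rw [← continuousOn_univ]
  refine (Wf_diff hp hm hb).continuousOn.comp (by fun_prop) ?_
  intro t _
  simpa using hs

lemma Kint_cont {p m b : ℝ} (hp : 0 < p) (hm : 0 < m) (hb : 0 < b) (y : Fin 2 → ℝ) {s0 s1 : ℂ}
    (h0 : |s0.im| < (p + m - b)/2) (h1 : |s1.im| < (p + m - b)/2) : Continuous (Kint p m b y s0 s1) := by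
  have := Wf_shift_cont hp hm hb h0
  have := Wf_shift_cont hp hm hb h1
  unfold Kint
  fun_prop

lemma Kint_bound {p m b η : ℝ} (hp : 0 < p) (hm : 0 < m) (hb : 0 < b) (y : Fin 2 → ℝ)
    (hη0 : 0 ≤ η) (hη : η < (p + m - b)/2) (R : ℝ) :
    ∃ B : ℝ → ℝ, Integrable B ∧ ∀ s0 s1 : ℂ, |s0.im| ≤ η → |s1.im| ≤ η → |s0.re| ≤ R → ∀ t : ℝ,
      ‖Kint p m b y s0 s1 t‖ ≤ B t := by
  obtain ⟨C, k, hC, hk, h⟩ := Wf_decay hp hm hb hη0 hη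
  refine ⟨fun t => C * C * Real.exp (k * R) * Real.exp (-k * |t|), (integrable_exp_abs hk).const_mul _, ?_⟩
  intro s0 s1 h0 h1 hR t
  have b0 := h (s0 - t) (by simpa using h0)
  have b1 := h (s1 - t) (by simpa using h1)
  rw [Kint, norm_mul, norm_mul]
  have e : ‖exp (I * (alphaPar p m : ℂ) * (t : ℂ) * ((y 0 : ℂ) - (y 1 : ℂ)))‖ = 1 := by
    rw [show I * (alphaPar p m : ℂ) * (t : ℂ) * ((y 0 : ℂ) - (y 1 : ℂ)) = ((alphaPar p m * t * (y 0 - y 1) : ℝ) : ℂ) * I by push_cast; ring]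
    exact norm_exp_ofReal_mul_I _
  rw [e, one_mul]
  have b1' : ‖Wf p m b (s1 - t)‖ ≤ C := b1.trans (by
    have : Real.exp (-k * |(s1 - t).re|) ≤ 1 := by
      apply Real.exp_le_one_iff.2
      have := abs_nonneg (s1 - t).re
      nlinarith
    nlinarith)
  have b0' : ‖Wf p m b (s0 - t)‖ ≤ C * (Real.exp (k * R) * Real.exp (-k * |t|)) := b0.trans (by
    rw [← Real.exp_add]
    gcongr
    have : |t| ≤ |s0.re| + |(s0 - t).re| := by
      have := abs_sub s0.re (s0 - t).re
      simpa using this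
    nlinarith)
  calc _ ≤ C * (Real.exp (k * R) * Real.exp (-k * |t|)) * C := by gcongr
    _ = _ := by ring

lemma Kint_integrable {p m b : ℝ} (hp : 0 < p) (hm : 0 < m) (hb : 0 < b) (y : Fin 2 → ℝ) {s0 s1 : ℂ}
    (h0 : |s0.im| < (p + m - b)/2) (h1 : |s1.im| < (p + m - b)/2) : Integrable (Kint p m b y s0 s1) := by
  obtain ⟨B, hB, h⟩ := Kint_bound hp hm hb y (η := max |s0.im| |s1.im|) (le_max_of_le_left (abs_nonneg _))
    (max_lt h0 h1) |s0.re|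
  refine hB.mono' (Kint_cont hp hm hb y h0 h1).aestronglyMeasurable ?_
  exact Filter.Eventually.of_forall (h s0 s1 (le_max_left _ _) (le_max_right _ _) le_rfl)

lemma abs_mul_le_of {e : ℝ} (he : |e| ≤ 1) (u : ℝ) : |e * u| ≤ |u| := by
  rw [abs_mul]
  exact mul_le_of_le_one_left (abs_nonneg _) he

lemma Kf_diff {p m b : ℝ} (hp : 0 < p) (hm : 0 < m) (hb : 0 < b) (y : Fin 2 → ℝ) (x0 x1 e0 e1 : ℝ)
    (he0 : |e0| ≤ 1) (he1 : |e1| ≤ 1) :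
    DifferentiableOn ℂ (fun r : ℂ => Kf p m b y (x0 + e0 * r) (x1 + e1 * r)) {r | |r.im| < (p+m-b)/2} := by
  have im : ∀ (x e : ℝ) (r : ℂ), ((x:ℂ) + e * r).im = e * r.im := by intro x e r; simp
  have re : ∀ (x e : ℝ) (r : ℂ), ((x:ℂ) + e * r).re = x + e * r.re := by intro x e r; simp
  apply holo_integral (f := fun r t => Kint p m b y (x0 + e0 * r) (x1 + e1 * r) t)
  · intro r hr
    have hr' : |r.im| < (p+m-b)/2 := hr
    refine (Kint_cont hp hm hb y ?_ ?_).aestronglyMeasurable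
    · rw [im]; exact (abs_mul_le_of he0 _).trans_lt hr'
    · rw [im]; exact (abs_mul_le_of he1 _).trans_lt hr'
  · refine Filter.Eventually.of_forall fun t => ?_
    have hW : ∀ (x e : ℝ), |e| ≤ 1 → DifferentiableOn ℂ (fun r : ℂ => Wf p m b (x + e * r - t)) {r | |r.im| < (p+m-b)/2} := by
      intro x e he
      refine (Wf_diff hp hm hb).comp (t := {r | |r.im| < (p+m-b)/2}) (f := fun r : ℂ => (x:ℂ) + e * r - t) (by fun_prop) ?_
      intro r hr
      have hr' : |r.im| < (p+m-b)/2 := hr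
      have : |((x:ℂ) + e * r - t).im| ≤ |r.im| := by
        rw [sub_im, im, ofReal_im, sub_zero]; exact abs_mul_le_of he _
      exact this.trans_lt hr'
    unfold Kint
    exact DifferentiableOn.mul (by fun_prop) ((hW x0 e0 he0).mul (hW x1 e1 he1))
  · intro r hr
    obtain ⟨ρ, hρ, η', hη', hball⟩ := strip_ball hr
    have hη0 : 0 ≤ η' := (abs_nonneg _).trans (hball r (Metric.mem_ball_self hρ))
    obtain ⟨B, hB, h⟩ := Kint_bound hp hm hb y hη0 hη' (|x0| + (‖r‖ + ρ))
    refine ⟨ρ, hρ, fun w hw => (hball w hw).trans_lt hη', B, hB, ?_⟩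
    refine Filter.Eventually.of_forall fun t w hw => ?_
    apply h
    · rw [im]; exact (abs_mul_le_of he0 _).trans (hball w hw)
    · rw [im]; exact (abs_mul_le_of he1 _).trans (hball w hw)
    · rw [re]
      have h1 : |w.re| ≤ ‖r‖ + ρ := by
        refine (Complex.abs_re_le_norm w).trans ?_
        have := norm_le_norm_add_norm_sub' w r
        rw [Metric.mem_ball, dist_eq_norm] at hw
        linarith
      have h2 := abs_mul_le_of he0 w.re
      have h3 := abs_add_le x0 (e0 * w.re)
      linarith

lemma J2_eq {p m b : ℝ} (hp : 0 < p) (hm : 0 < m) (hb : 0 < b) (hbM : b < p + m) (x y : Fin 2 → ℝ) :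
    J2 p m b x y = exp (I * (alphaPar p m : ℂ) * (y 1 : ℂ) * ((x 0 : ℂ) + (x 1 : ℂ))) *
      Kf p m b y (x 0) (x 1) := by
  rw [J2, Kf]
  congr 2
  ext t
  have h : ∀ u : ℝ, |((u:ℂ) - t).im| < (p + m - b)/2 := by
    intro u; simp; linarith
  rw [Fin.prod_univ_two, W_ident hp hm hb (h _), W_ident hp hm hb (h _), Kint]

lemma Kf_translate (p m b : ℝ) (y : Fin 2 → ℝ) (s0 s1 : ℂ) (u : ℝ) :
    Kf p m b y (s0 + u) (s1 + u) = exp (I * (alphaPar p m : ℂ) * (u : ℂ) * ((y 0 : ℂ) - (y 1 : ℂ))) * Kf p m b y s0 s1 := by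
  rw [Kf, ← integral_add_right_eq_self _ u, Kf, ← integral_const_mul]
  congr 1
  ext t
  rw [Kint, Kint, show s0 + u - ((t + u : ℝ) : ℂ) = s0 - t by push_cast; ring,
    show s1 + u - ((t + u : ℝ) : ℂ) = s1 - t by push_cast; ring,
    show I * (alphaPar p m : ℂ) * ((t + u : ℝ) : ℂ) * ((y 0 : ℂ) - (y 1 : ℂ)) =
      I * (alphaPar p m : ℂ) * (u : ℂ) * ((y 0 : ℂ) - (y 1 : ℂ)) +
      I * (alphaPar p m : ℂ) * (t : ℂ) * ((y 0 : ℂ) - (y 1 : ℂ)) by push_cast; ring, exp_add]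
  ring

lemma F_star {p m b : ℝ} (hp : 0 < p) (hm : 0 < m) (hb : 0 < b) (hbM : b < p + m) (y : Fin 2 → ℝ)
    (F : ℂ × (Fin 2 → ℂ) → ℂ)
    (hFhol : DifferentiableOn ℂ F (D2 p m))
    (hFagree : ∀ b : ℂ, 0 < b.re → b.re < p + m → ∀ x : Fin 2 → ℝ,
      F (b, fun i => (x i : ℂ)) = J2 p m b x y) (x0 x1 e0 e1 τ : ℝ)
    (he0 : |e0| ≤ 1) (he1 : |e1| ≤ 1) (r : ℂ) (hr : |r.im| < (p+m-b)/2) :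
    F (b, ![x0 + (e0 + τ) * r, x1 + (e1 + τ) * r]) =
      exp (I * (alphaPar p m : ℂ) * (τ * r) * ((y 0 : ℂ) - (y 1 : ℂ))) *
      (exp (I * (alphaPar p m : ℂ) * (y 1 : ℂ) * (x0 + (e0 + τ) * r + (x1 + (e1 + τ) * r))) *
        Kf p m b y (x0 + e0 * r) (x1 + e1 * r)) := by
  refine ident_aux (isOpen_strip _) (convex_strip _)
    (f := fun r : ℂ => F (b, ![x0 + (e0 + τ) * r, x1 + (e1 + τ) * r]))
    (g := fun r : ℂ => exp (I * (alphaPar p m : ℂ) * (τ * r) * ((y 0 : ℂ) - (y 1 : ℂ))) *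
      (exp (I * (alphaPar p m : ℂ) * (y 1 : ℂ) * (x0 + (e0 + τ) * r + (x1 + (e1 + τ) * r))) *
        Kf p m b y (x0 + e0 * r) (x1 + e1 * r))) ?_ ?_ ?_ ?_ hr
  · refine hFhol.comp (f := fun r : ℂ => ((b:ℂ), ![(x0:ℂ) + (e0 + τ) * r, x1 + (e1 + τ) * r])) ?_ ?_
    · apply Differentiable.differentiableOn
      refine Differentiable.prodMk (by fun_prop) ?_
      rw [differentiable_pi]
      intro i
      fin_cases i <;> simp <;> fun_prop
    · intro r hr
      have hr' : |r.im| < (p+m-b)/2 := hr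
      refine ⟨⟨by simpa using hb, by simpa using hbM⟩, ?_⟩
      simp
      have h1 := abs_mul_le_of he0 r.im
      have h2 := abs_mul_le_of he1 r.im
      have h3 := abs_sub (e0 * r.im) (e1 * r.im)
      rw [show (e0 + τ) * r.im - (e1 + τ) * r.im = e0 * r.im - e1 * r.im by ring]
      linarith
  · exact DifferentiableOn.mul (by fun_prop) (DifferentiableOn.mul (by fun_prop) (Kf_diff hp hm hb y x0 x1 e0 e1 he0 he1))
  · simp; linarith
  · refine Filter.Eventually.of_forall fun r => ?_
    have h1 := hFagree b (by simpa using hb) (by simpa using hbM) ![x0 + (e0 + τ) * r, x1 + (e1 + τ) * r]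
    rw [J2_eq hp hm hb hbM] at h1
    have e : (fun i => ((![x0 + (e0 + τ) * r, x1 + (e1 + τ) * r] i : ℝ) : ℂ)) = ![(x0:ℂ) + (e0 + τ) * r, x1 + (e1 + τ) * r] := by
      ext i; fin_cases i <;> simp
    rw [e] at h1
    have h2 := Kf_translate p m b y (x0 + e0 * r) (x1 + e1 * r) (τ * r)
    simp only [h1]
    simp only [Matrix.cons_val_zero, Matrix.cons_val_one]
    push_cast at h2 ⊢
    rw [show (x0:ℂ) + (e0 + τ) * r = x0 + e0 * r + τ * r by ring, show (x1:ℂ) + (e1 + τ) * r = x1 + e1 * r + τ * r by ring, h2]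
    ring


lemma trig4 (a0 a1 b0 b1 : ℂ) :
    sinh (b0 - a1) * (cosh a0 * cosh b1) + sinh (a0 - b1) * (cosh b0 * cosh a1) =
      sinh (a0 - a1) * (cosh b0 * cosh b1) + sinh (b0 - b1) * (cosh a0 * cosh a1) := by
  simp only [sinh_sub]; ring

lemma cosh_ne {p b : ℝ} (hp : 0 < p) (hb : |b| < p) (u : ℝ) :
    cosh ((Real.pi:ℂ) * (u + I * b / 2) / p) ≠ 0 := by
  have hpi := Real.pi_pos
  have him : ((Real.pi:ℂ) * (u + I * b / 2) / p).im = Real.pi / p * (b / 2) := by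
    rw [show (Real.pi:ℂ) * (u + I * b / 2) / p = ((Real.pi / p : ℝ):ℂ) * (u + I * b / 2) by push_cast; ring,
      im_ofReal_mul, im_add_half]; simp
  have hθ : |Real.pi / p * (b / 2)| < Real.pi / 2 := by
    rw [abs_mul, abs_of_pos (by positivity), abs_div, abs_of_pos (by norm_num : (0:ℝ) < 2)]
    rw [div_mul_div_comm, div_lt_div_iff₀ (by positivity) (by positivity)]
    nlinarith
  have h := norm_cosh_ge ((Real.pi:ℂ) * (u + I * b / 2) / p) (le_of_eq (by rw [him])) hθ
  have hc : 0 < Real.cos |Real.pi / p * (b / 2)| :=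
    Real.cos_pos_of_mem_Ioo ⟨by have := abs_nonneg (Real.pi / p * (b / 2)); linarith, hθ⟩
  apply norm_pos_iff.1
  refine lt_of_lt_of_le ?_ h
  positivity

lemma W_omega {p m b : ℝ} (hp : 0 < p) (hm : 0 < m) (hb : 0 < b) (hbp : b < p) (u : ℝ) :
    ∃ ω : ℂ, Wf p m b (u - I * m / 2) = ω * cosh ((Real.pi:ℂ) * (u + I * b / 2) / p) ∧
      Wf p m b (u + I * m / 2) = ω * cosh ((Real.pi:ℂ) * (u - I * b / 2) / p) := by
  have h1 := cosh_ne hp (b := b) (by rwa [abs_of_pos hb]) u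
  have h := W_func hp hm hb hbp u
  refine ⟨Wf p m b (u - I * m / 2) / cosh ((Real.pi:ℂ) * (u + I * b / 2) / p), ?_, ?_⟩
  · rw [div_mul_cancel₀ _ h1]
  · rw [div_mul_eq_mul_div, eq_div_iff h1, h]

lemma K_rel {p m b : ℝ} (hp : 0 < p) (hm : 0 < m) (hb : 0 < b) (hbp : b < p) (y : Fin 2 → ℝ) (x0 x1 : ℝ) :
    sinh ((Real.pi:ℂ) * (x0 - x1 - I * b) / p) * Kf p m b y (x0 - I * m / 2) (x1 + I * m / 2) -
      sinh ((Real.pi:ℂ) * (x1 - x0 - I * b) / p) * Kf p m b y (x0 + I * m / 2) (x1 - I * m / 2) =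
    sinh ((Real.pi:ℂ) * (x0 - x1) / p) *
      (Kf p m b y (x0 + I * m / 2) (x1 + I * m / 2) + Kf p m b y (x0 - I * m / 2) (x1 - I * m / 2)) := by
  have im1 : ∀ u : ℝ, |((u:ℂ) - I * m / 2).im| < (p + m - b)/2 := by
    intro u; rw [im_sub_half, ofReal_im, abs_lt]; constructor <;> linarith
  have im2 : ∀ u : ℝ, |((u:ℂ) + I * m / 2).im| < (p + m - b)/2 := by
    intro u; rw [im_add_half, ofReal_im, abs_lt]; constructor <;> linarith
  have i1 := Kint_integrable hp hm hb y (im1 x0) (im2 x1)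
  have i2 := Kint_integrable hp hm hb y (im2 x0) (im1 x1)
  have i3 := Kint_integrable hp hm hb y (im2 x0) (im2 x1)
  have i4 := Kint_integrable hp hm hb y (im1 x0) (im1 x1)
  simp only [Kf]
  rw [← integral_add i3 i4, ← integral_const_mul, ← integral_const_mul, ← integral_const_mul,
    ← integral_sub (i1.const_mul _) (i2.const_mul _)]
  congr 1
  ext t
  obtain ⟨ω0, a0, b0⟩ := W_omega hp hm hb hbp (x0 - t)
  obtain ⟨ω1, a1, b1⟩ := W_omega hp hm hb hbp (x1 - t)
  push_cast at a0 b0 a1 b1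
  simp only [Kint]
  rw [show (x0:ℂ) - I * m / 2 - t = x0 - t - I * m / 2 by ring,
    show (x0:ℂ) + I * m / 2 - t = x0 - t + I * m / 2 by ring,
    show (x1:ℂ) - I * m / 2 - t = x1 - t - I * m / 2 by ring,
    show (x1:ℂ) + I * m / 2 - t = x1 - t + I * m / 2 by ring, a0, b0, a1, b1]
  have T := trig4 ((Real.pi:ℂ) * (x0 - t + I * b / 2) / p) ((Real.pi:ℂ) * (x1 - t + I * b / 2) / p)
    ((Real.pi:ℂ) * (x0 - t - I * b / 2) / p) ((Real.pi:ℂ) * (x1 - t - I * b / 2) / p)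
  rw [show (Real.pi:ℂ) * (x0 - t - I * b / 2) / p - (Real.pi:ℂ) * (x1 - t + I * b / 2) / p = (Real.pi:ℂ) * (x0 - x1 - I * b) / p by ring,
    show (Real.pi:ℂ) * (x0 - t + I * b / 2) / p - (Real.pi:ℂ) * (x1 - t - I * b / 2) / p = -((Real.pi:ℂ) * (x1 - x0 - I * b) / p) by ring,
    show (Real.pi:ℂ) * (x0 - t + I * b / 2) / p - (Real.pi:ℂ) * (x1 - t + I * b / 2) / p = (Real.pi:ℂ) * (x0 - x1) / p by ring,
    show (Real.pi:ℂ) * (x0 - t - I * b / 2) / p - (Real.pi:ℂ) * (x1 - t - I * b / 2) / p = (Real.pi:ℂ) * (x0 - x1) / p by ring,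
    sinh_neg] at T
  linear_combination (exp (I * (alphaPar p m : ℂ) * (t : ℂ) * ((y 0 : ℂ) - (y 1 : ℂ))) * ω0 * ω1) * T

lemma real_case {p m b : ℝ} (hp : 0 < p) (hm : 0 < m) (hb : 0 < b) (hbp : b < p) (y : Fin 2 → ℝ)
    (F : ℂ × (Fin 2 → ℂ) → ℂ)
    (hFhol : DifferentiableOn ℂ F (D2 p m))
    (hFagree : ∀ b : ℂ, 0 < b.re → b.re < p + m → ∀ x : Fin 2 → ℝ,
      F (b, fun i => (x i : ℂ)) = J2 p m b x y) (x0 x1 : ℝ) :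
    sinh ((Real.pi:ℂ) * (x0 - x1 - I * b) / p) * F (b, ![x0 - I * m, x1]) -
      sinh ((Real.pi:ℂ) * (x1 - x0 - I * b) / p) * F (b, ![(x0:ℂ), x1 - I * m]) =
    sinh ((Real.pi:ℂ) * (x0 - x1) / p) *
      ((exp (((2 * Real.pi * y 0 / p : ℝ) : ℂ)) + exp (((2 * Real.pi * y 1 / p : ℝ) : ℂ))) *
        F (b, ![(x0:ℂ), x1])) ∧
    F (b, ![x0 - I * m, x1 - I * m]) = exp (((2 * Real.pi * (y 0 + y 1) / p : ℝ) : ℂ)) * F (b, ![(x0:ℂ), x1]) := by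
  have hpc : (p:ℂ) ≠ 0 := by exact_mod_cast hp.ne'
  have hmc : (m:ℂ) ≠ 0 := by exact_mod_cast hm.ne'
  have hr : |(I * m / 2 : ℂ).im| < (p + m - b)/2 := by
    have := im_add_half 0 m
    rw [zero_add] at this
    rw [this, zero_im, abs_lt]; constructor <;> linarith
  have S := fun e0 e1 τ he0 he1 => F_star hp hm hb (by linarith) y F hFhol hFagree x0 x1 e0 e1 τ he0 he1 (I * m / 2) hr
  have S1 := S (-1) 1 (-1) (by simp) (by simp)
  have S2 := S 1 (-1) (-1) (by simp) (by simp)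
  have S3 := S 1 1 (-1) (by simp) (by simp)
  have S4 := S (-1) (-1) 1 (by simp) (by simp)
  have S5 := S 0 0 (-2) (by simp) (by simp)
  have S6 := S 0 0 0 (by simp) (by simp)
  clear S
  have K := K_rel hp hm hb hbp y x0 x1
  have hα : I * (alphaPar p m : ℂ) * (I * m) = -(2 * Real.pi / p) := by
    rw [alphaPar]; push_cast; field_simp; rw [I_sq]
  set A : ℂ := I * (alphaPar p m : ℂ) with hA
  set P := exp (A * y 1 * (x0 + x1)) with hP
  set E := exp ((Real.pi:ℂ) * (y 0 + y 1) / p) with hE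
  have T1 : F (b, ![x0 - I * m, x1]) = E * P * Kf p m b y (x0 - I * m / 2) (x1 + I * m / 2) := by
    convert S1 using 1
    · push_cast; ring_nf
    · rw [← mul_assoc, hE, hP, ← exp_add, ← exp_add]
      congr 1
      · congr 1; push_cast; linear_combination ((y 0 - y 1)/2 + y 1 : ℂ) * hα
      · push_cast; ring_nf
  have T2 : F (b, ![(x0:ℂ), x1 - I * m]) = E * P * Kf p m b y (x0 + I * m / 2) (x1 - I * m / 2) := by
    convert S2 using 1
    · push_cast; ring_nf
    · rw [← mul_assoc, hE, hP, ← exp_add, ← exp_add]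
      congr 1
      · congr 1; push_cast; linear_combination ((y 0 - y 1)/2 + y 1 : ℂ) * hα
      · push_cast; ring_nf
  have T3 : exp (((2 * Real.pi * y 1 / p : ℝ) : ℂ)) * F (b, ![(x0:ℂ), x1]) = E * P * Kf p m b y (x0 + I * m / 2) (x1 + I * m / 2) := by
    rw [show (x0:ℂ) + (((1:ℝ):ℂ) + ((-1:ℝ):ℂ)) * (I * m / 2) = x0 by push_cast; ring,
      show (x1:ℂ) + (((1:ℝ):ℂ) + ((-1:ℝ):ℂ)) * (I * m / 2) = x1 by push_cast; ring] at S3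
    rw [S3, ← mul_assoc, ← mul_assoc, hE, hP, ← exp_add, ← exp_add, ← exp_add]
    congr 1
    · congr 1; push_cast; linear_combination (-(y 0 - y 1)/2 : ℂ) * hα
    · push_cast; ring_nf
  have T4 : exp (((2 * Real.pi * y 0 / p : ℝ) : ℂ)) * F (b, ![(x0:ℂ), x1]) = E * P * Kf p m b y (x0 - I * m / 2) (x1 - I * m / 2) := by
    rw [show (x0:ℂ) + (((-1:ℝ):ℂ) + ((1:ℝ):ℂ)) * (I * m / 2) = x0 by push_cast; ring,
      show (x1:ℂ) + (((-1:ℝ):ℂ) + ((1:ℝ):ℂ)) * (I * m / 2) = x1 by push_cast; ring] at S4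
    rw [S4, ← mul_assoc, ← mul_assoc, hE, hP, ← exp_add, ← exp_add, ← exp_add]
    congr 1
    · congr 1; push_cast; linear_combination ((y 0 - y 1)/2 : ℂ) * hα
    · push_cast; ring_nf
  constructor
  · rw [add_mul, T3, T4, T1, T2]
    linear_combination (E * P) * K
  · have S6' : F (b, ![(x0:ℂ), x1]) = P * Kf p m b y x0 x1 := by
      convert S6 using 1
      · simp
      · simp [hP]
    rw [S6', ← mul_assoc, hP, ← exp_add]
    convert S5 using 1
    · push_cast; ring_nf
    · rw [← mul_assoc, ← exp_add]
      congr 1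
      · congr 1; push_cast; linear_combination ((y 0 - y 1) + 2 * y 1 : ℂ) * hα
      · push_cast; ring_nf


lemma half_conv (A B C : ℝ) : IsOpen {r : ℂ | A * r.re + B * r.im < C} ∧ Convex ℝ {r : ℂ | A * r.re + B * r.im < C} := by
  constructor
  · exact isOpen_lt (by fun_prop) continuous_const
  · apply convex_halfSpace_lt
    constructor
    · intro x y; simp; ring
    · intro c x; simp; ring

lemma core {p m : ℝ} (hp : 0 < p) (hm : 0 < m) (y : Fin 2 → ℝ)
    (F : ℂ × (Fin 2 → ℂ) → ℂ)
    (hFhol : DifferentiableOn ℂ F (D2 p m))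
    (hFagree : ∀ b : ℂ, 0 < b.re → b.re < p + m → ∀ x : Fin 2 → ℝ,
      F (b, fun i => (x i : ℂ)) = J2 p m b x y) (b x0 x1 : ℂ) (hb : 0 < b.re) (hbm : b.re < min p m)
    (hx : |(x0 - x1).im| < min p m - b.re) :
    sinh ((Real.pi:ℂ) * (x0 - x1 - I * b) / p) * F (b, ![x0 - I * m, x1]) -
      sinh ((Real.pi:ℂ) * (x1 - x0 - I * b) / p) * F (b, ![x0, x1 - I * m]) =
    sinh ((Real.pi:ℂ) * (x0 - x1) / p) *
      ((exp (((2 * Real.pi * y 0 / p : ℝ) : ℂ)) + exp (((2 * Real.pi * y 1 / p : ℝ) : ℂ))) *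
        F (b, ![x0, x1])) ∧
    F (b, ![x0 - I * m, x1 - I * m]) = exp (((2 * Real.pi * (y 0 + y 1) / p : ℝ) : ℂ)) * F (b, ![x0, x1]) := by
  set μ := min p m with hμ
  have hμp : μ ≤ p := min_le_left _ _
  have hμm : μ ≤ m := min_le_right _ _
  set D := x0.im - x1.im with hD
  rw [sub_im, ← hD, abs_lt] at hx
  set br : ℂ → ℂ := fun r => b.re + b.im * r with hbr
  set X0 : ℂ → ℂ := fun r => x0.re + x0.im * r with hX0
  set X1 : ℂ → ℂ := fun r => x1.re + x1.im * r with hX1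
  set U : Set ℂ := {r | (-b.im) * r.re + 0 * r.im < b.re} ∩
    ({r | b.im * r.re + D * r.im < μ - b.re} ∩ {r | b.im * r.re + (-D) * r.im < μ - b.re}) with hU
  have hUo : IsOpen U := (half_conv _ _ _).1.inter ((half_conv _ _ _).1.inter (half_conv _ _ _).1)
  have hUc : Convex ℝ U := (half_conv _ _ _).2.inter ((half_conv _ _ _).2.inter (half_conv _ _ _).2)
  have h0 : (0:ℂ) ∈ U := by
    refine ⟨?_, ?_, ?_⟩ <;> simp <;> linarith
  have hI : I ∈ U := by
    refine ⟨?_, ?_, ?_⟩ <;> simp <;> linarith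
  have bI : br I = b := by simp [hbr, re_add_im]
  have xI0 : X0 I = x0 := by simp [hX0, re_add_im]
  have xI1 : X1 I = x1 := by simp [hX1, re_add_im]
  have hd : ∀ u v : ℝ, (|u - v| ≤ m) →
      DifferentiableOn ℂ (fun r => F (br r, ![X0 r - I * u, X1 r - I * v])) U := by
    intro u v huv
    refine hFhol.comp (f := fun r : ℂ => (br r, ![X0 r - I * u, X1 r - I * v])) ?_ ?_
    · apply Differentiable.differentiableOn
      refine Differentiable.prodMk (by fun_prop) ?_
      rw [differentiable_pi]
      intro i
      fin_cases i <;> simp <;> fun_prop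
    · rintro r ⟨h1, h2, h3⟩
      simp only [Set.mem_setOf_eq] at h1 h2 h3
      have hre : (br r).re = b.re + b.im * r.re := by simp [hbr]
      have him : (X0 r - I * u - (X1 r - I * v)).im = D * r.im - (u - v) := by
        simp [hX0, hX1, hD]; ring
      rw [abs_le] at huv
      refine ⟨⟨?_, ?_⟩, ?_⟩
      · show 0 < (br r).re
        rw [hre]; linarith
      · show (br r).re < p + m
        rw [hre]; linarith
      · show |(X0 r - I * u - (X1 r - I * v)).im| < p + m - (br r).re
        rw [hre, him, abs_lt]; constructor <;> linarith
  have d1 := hd m 0 (by simp [abs_of_pos hm])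
  have d2 := hd 0 m (by simp [abs_of_pos hm])
  have d3 := hd 0 0 (by simp [hm.le])
  have d4 := hd m m (by simp [hm.le])
  simp only [ofReal_zero, mul_zero, sub_zero] at d1 d2 d3 d4
  have ev : ∀ᶠ r : ℝ in nhds 0, 0 < b.re + b.im * r ∧ b.re + b.im * r < p := by
    have hc : Filter.Tendsto (fun r : ℝ => b.re + b.im * r) (nhds 0) (nhds (b.re + b.im * 0)) :=
      (by fun_prop : Continuous (fun r : ℝ => b.re + b.im * r)).tendsto 0
    rw [mul_zero, add_zero] at hc
    exact (hc.eventually_const_lt hb).and (hc.eventually_lt_const (by linarith))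
  have rc : ∀ᶠ r : ℝ in nhds 0, _ := ev.mono fun r hr =>
    real_case hp hm hr.1 hr.2 y F hFhol hFagree (x0.re + x0.im * r) (x1.re + x1.im * r)
  push_cast at rc
  constructor
  · have := ident_aux hUo hUc
      (f := fun r => sinh ((Real.pi:ℂ) * (X0 r - X1 r - I * br r) / p) * F (br r, ![X0 r - I * m, X1 r]) -
        sinh ((Real.pi:ℂ) * (X1 r - X0 r - I * br r) / p) * F (br r, ![X0 r, X1 r - I * m]))
      (g := fun r => sinh ((Real.pi:ℂ) * (X0 r - X1 r) / p) *
        ((exp (((2 * Real.pi * y 0 / p : ℝ) : ℂ)) + exp (((2 * Real.pi * y 1 / p : ℝ) : ℂ))) *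
        F (br r, ![X0 r, X1 r])))
      (DifferentiableOn.sub (DifferentiableOn.mul (by fun_prop) d1) (DifferentiableOn.mul (by fun_prop) d2))
      (DifferentiableOn.mul (by fun_prop) (DifferentiableOn.const_mul d3 _)) h0
      (by
        refine rc.mono fun r hr => ?_
        push_cast
        exact hr.1) hI
    simpa only [bI, xI0, xI1] using this
  · have := ident_aux hUo hUc
      (f := fun r => F (br r, ![X0 r - I * m, X1 r - I * m]))
      (g := fun r => exp (((2 * Real.pi * (y 0 + y 1) / p : ℝ) : ℂ)) * F (br r, ![X0 r, X1 r]))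
      d4 (DifferentiableOn.const_mul d3 _) h0
      (by
        refine rc.mono fun r hr => ?_
        push_cast
        exact hr.2) hI
    simpa only [bI, xI0, xI1] using this

lemma alphaPar_swap (p m : ℝ) : alphaPar p m = alphaPar m p := by
  rw [alphaPar, alphaPar, mul_comm p]

lemma Ghyp_swap (p m : ℝ) (z : ℂ) : Ghyp p m z = Ghyp m p z := by
  rw [Ghyp, Ghyp, ghyp, ghyp]
  congr 3
  ext y
  ring_nf

lemma J2_swap (p m : ℝ) (b : ℂ) (x y : Fin 2 → ℝ) : J2 p m b x y = J2 m p b x y := by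
  simp only [J2, alphaPar_swap p m, Ghyp_swap p m]

lemma D2_swap (p m : ℝ) : D2 p m = D2 m p := by
  simp only [D2, add_comm p m]

lemma core_div {p m : ℝ} (hp : 0 < p) (hm : 0 < m) (y : Fin 2 → ℝ)
    (F : ℂ × (Fin 2 → ℂ) → ℂ)
    (hFhol : DifferentiableOn ℂ F (D2 p m))
    (hFagree : ∀ b : ℂ, 0 < b.re → b.re < p + m → ∀ x : Fin 2 → ℝ,
      F (b, fun i => (x i : ℂ)) = J2 p m b x y) (b : ℂ) (hb : 0 < b.re) (hbm : b.re < min p m)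
    (x : Fin 2 → ℂ) (hx : |(x 0 - x 1).im| < min p m - b.re) :
      ((Complex.sinh ((Real.pi : ℂ) * (x 0 - x 1) / (p : ℂ)) ≠ 0 →
        Complex.sinh ((Real.pi : ℂ) * (x 0 - x 1 - Complex.I * b) / (p : ℂ)) /
            Complex.sinh ((Real.pi : ℂ) * (x 0 - x 1) / (p : ℂ)) *
            F (b, ![x 0 - Complex.I * (m : ℂ), x 1]) +
          Complex.sinh ((Real.pi : ℂ) * (x 1 - x 0 - Complex.I * b) / (p : ℂ)) /
            Complex.sinh ((Real.pi : ℂ) * (x 1 - x 0) / (p : ℂ)) *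
            F (b, ![x 0, x 1 - Complex.I * (m : ℂ)])
        = (Complex.exp (((2 * Real.pi * y 0 / p : ℝ) : ℂ)) +
            Complex.exp (((2 * Real.pi * y 1 / p : ℝ) : ℂ))) * F (b, x)) ∧
      F (b, ![x 0 - Complex.I * (m : ℂ), x 1 - Complex.I * (m : ℂ)])
        = Complex.exp (((2 * Real.pi * (y 0 + y 1) / p : ℝ) : ℂ)) * F (b, x)) := by
  obtain ⟨h1, h2⟩ := core hp hm y F hFhol hFagree b (x 0) (x 1) hb hbm hx
  have ex : ![x 0, x 1] = x := by ext i; fin_cases i <;> rfl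
  rw [ex] at h1 h2
  refine ⟨fun hs => ?_, h2⟩
  have hn : sinh ((Real.pi : ℂ) * (x 1 - x 0) / (p : ℂ)) = - sinh ((Real.pi : ℂ) * (x 0 - x 1) / (p : ℂ)) := by
    rw [← sinh_neg]; congr 1; ring
  rw [hn]
  apply mul_left_cancel₀ hs
  rw [← h1, div_neg]
  generalize sinh ((Real.pi : ℂ) * (x 0 - x 1) / (p : ℂ)) = s at hs ⊢
  generalize sinh ((Real.pi : ℂ) * (x 0 - x 1 - Complex.I * b) / (p : ℂ)) = s1
  generalize sinh ((Real.pi : ℂ) * (x 1 - x 0 - Complex.I * b) / (p : ℂ)) = s2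
  generalize F (b, ![x 0 - Complex.I * (m : ℂ), x 1]) = f1
  generalize F (b, ![x 0, x 1 - Complex.I * (m : ℂ)]) = f2
  field_simp
  ring

/-- Prop. 4.2: the holomorphic extension `F` of `J₂(·;·,y)` to `D₂` satisfies
the joint eigenvalue equations of the two commuting Calogero–Moser A∆Os, for
`Re b ∈ (0,a_s)` and `|Im(x₁−x₂)| < a_s − Re b`. Here `(c,d)` runs over
`(a₊,a₋), (a₋,a₊)`, corresponding to `δ = +,−` with `c = a_δ`, `d = a_{−δ}`. -/
theorem statement12 (ap am : ℝ) (hap : 0 < ap) (ham : 0 < am) (y : Fin 2 → ℝ)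
    (F : ℂ × (Fin 2 → ℂ) → ℂ)
    (hFhol : DifferentiableOn ℂ F (D2 ap am))
    (hFagree : ∀ b : ℂ, 0 < b.re → b.re < ap + am → ∀ x : Fin 2 → ℝ,
      F (b, fun i => (x i : ℂ)) = J2 ap am b x y) :
    ∀ b : ℂ, 0 < b.re → b.re < min ap am →
    ∀ x : Fin 2 → ℂ, |(x 0 - x 1).im| < min ap am - b.re →
    ∀ c d : ℝ, ((c, d) = (ap, am) ∨ (c, d) = (am, ap)) →
      ((Complex.sinh ((Real.pi : ℂ) * (x 0 - x 1) / (c : ℂ)) ≠ 0 →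
        Complex.sinh ((Real.pi : ℂ) * (x 0 - x 1 - Complex.I * b) / (c : ℂ)) /
            Complex.sinh ((Real.pi : ℂ) * (x 0 - x 1) / (c : ℂ)) *
            F (b, ![x 0 - Complex.I * (d : ℂ), x 1]) +
          Complex.sinh ((Real.pi : ℂ) * (x 1 - x 0 - Complex.I * b) / (c : ℂ)) /
            Complex.sinh ((Real.pi : ℂ) * (x 1 - x 0) / (c : ℂ)) *
            F (b, ![x 0, x 1 - Complex.I * (d : ℂ)])
        = (Complex.exp (((2 * Real.pi * y 0 / c : ℝ) : ℂ)) +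
            Complex.exp (((2 * Real.pi * y 1 / c : ℝ) : ℂ))) * F (b, x)) ∧
      F (b, ![x 0 - Complex.I * (d : ℂ), x 1 - Complex.I * (d : ℂ)])
        = Complex.exp (((2 * Real.pi * (y 0 + y 1) / c : ℝ) : ℂ)) * F (b, x)) := by
  intro b hb hbm x hx c d hcd
  rcases hcd with h | h
  · obtain ⟨rfl, rfl⟩ := Prod.mk.inj h
    exact core_div hap ham y F hFhol hFagree b hb hbm x hx
  · obtain ⟨rfl, rfl⟩ := Prod.mk.inj h
    rw [min_comm] at hbm hx
    refine core_div ham hap y F ?_ ?_ b hb hbm x hx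
    · rw [D2_swap]; exact hFhol
    · intro b' h1 h2 x'
      rw [J2_swap]
      exact hFagree b' h1 (by linarith) x'
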